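/- arXiv:2412.00389 — 2 statements merged into one kernel-verified Lean document; each statement's English description precedes it below -/
import Mathlib

section
/- Let f(n) = b_d·n^d + ... + b_0 be a polynomial with integer coefficients such that b_d > 0, gcd(b_d, ..., b_0) = 1, and f(p) is a positive integer for every prime p. Then there exist constants c_1, c_2 > 0 depending only on f such that for every real x ≥ 2 and every real t > 0, #{p ≤ x : f(p)/φ(f(p)) > t} ≤ c_1 · exp(−exp(c_2·t)) · π(x), where p runs over primes and π(x) denotes the number of primes not exceeding x. -/
/-!
Write `m / φ m = ∏ q / (q - 1)` over the primes `q ∣ m`, with `m = f p` and `p ≤ n`. By Mertens'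
bound the primes `q ≤ y` contribute at most a constant times `log y`. As `m` has `O(log n)` prime
factors, those above `(log n) / 4` contribute `O(1)`. Hence, taking `y = exp (t / M)` for a suitable
constant `M`, a ratio larger than `t` forces `∑ 1 / q ≥ 1` over the primes `q ∣ f p` with
`y < q ≤ (log n) / 4`.

The exponential moment of this sum with parameter `y ^ (1 / 4)`, taken over the primes `p ≤ n`, is
`O(π(n))`: expanding the exponential gives sums over finite sets `s` of such primes `q`, modulo
`Q = ∏ q ∈ s, q` the polynomial has at most `(deg f) ^ #s` roots by the Chinese remainder theorem,
and `Q ≤ √n`, so that each residue class modulo `Q` contains `O(π(n) / √Q)` primes. Markov's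
inequality then bounds the number of exceptional `p` by `O(exp (-y ^ (1 / 4)) π(n))`.

The estimate for residue classes comes from `N! ∣ Q ^ N ∏_{k < N} (Q k + a)`: the primes above `N`
among the factors `Q k + a` have product at most `Q ^ (2 N)`.
-/

open Finset Polynomial Real
open scoped Nat

theorem pow_div_dvd_factorial (q N : ℕ) : q ^ (N / q) ∣ N ! := by
  obtain rfl | hq := Nat.eq_zero_or_pos q
  · simp
  calc q ^ (N / q) ∣ q ! ^ (N / q) := pow_dvd_pow_of_dvd (Nat.dvd_factorial hq le_rfl) _
    _ ∣ (N / q * q)! := by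
      simpa using Nat.prod_factorial_dvd_factorial_sum (range (N / q)) fun _ ↦ q
    _ ∣ N ! := Nat.factorial_dvd_factorial (Nat.div_mul_le_self N q)

theorem prod_primesLE_pow_div_dvd_factorial (N : ℕ) :
    ∏ q ∈ Nat.primesLE N, q ^ (N / q) ∣ N ! :=
  prod_dvd_of_isRelPrime
    (fun _ ha _ hb hab ↦ Nat.coprime_iff_isRelPrime.1 <| Nat.Coprime.pow _ _ <|
      (Nat.coprime_primes (Nat.prime_of_mem_primesLE ha) (Nat.prime_of_mem_primesLE hb)).2 hab)
    fun q _ ↦ pow_div_dvd_factorial q N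

theorem sum_primesLE_div_mul_log_le (N : ℕ) :
    ∑ q ∈ Nat.primesLE N, ((N / q : ℕ) : ℝ) * log q ≤ N * log N := by
  have hpos : ∀ q ∈ Nat.primesLE N, 0 < q ^ (N / q) := fun q hq ↦
    pow_pos (Nat.prime_of_mem_primesLE hq).pos _
  have hle : ∏ q ∈ Nat.primesLE N, q ^ (N / q) ≤ N ^ N :=
    (Nat.le_of_dvd N.factorial_pos (prod_primesLE_pow_div_dvd_factorial N)).trans
      N.factorial_le_pow
  calc ∑ q ∈ Nat.primesLE N, ((N / q : ℕ) : ℝ) * log q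
      = log ((∏ q ∈ Nat.primesLE N, q ^ (N / q) : ℕ) : ℝ) := by
        rw [Nat.cast_prod, log_prod fun q hq ↦ by exact_mod_cast (hpos q hq).ne']
        simp
    _ ≤ log ((N ^ N : ℕ) : ℝ) :=
        log_le_log (by exact_mod_cast prod_pos hpos) (by exact_mod_cast hle)
    _ = N * log N := by simp

theorem half_mul_div_le_natCast_div {q N : ℕ} (hq : 0 < q) (hqN : q ≤ N) :
    (N : ℝ) / 2 / q ≤ ((N / q : ℕ) : ℝ) := by
  have h : N ≤ N / q * q * 2 := by
    have h₁ := Nat.div_add_mod' N q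
    have h₂ := Nat.mod_lt N hq
    have h₃ := Nat.le_mul_of_pos_left q (Nat.div_pos hqN hq)
    omega
  rw [div_le_iff₀ (by exact_mod_cast hq), div_le_iff₀ two_pos]
  exact_mod_cast h

theorem sum_primesLE_log_div_le (N : ℕ) :
    ∑ q ∈ Nat.primesLE N, log q / q ≤ 2 * log N := by
  obtain rfl | hN := Nat.eq_zero_or_pos N
  · simp
  have hterm : ∀ q ∈ Nat.primesLE N,
      (N : ℝ) / 2 * (log q / q) ≤ ((N / q : ℕ) : ℝ) * log q := fun q hq ↦ by
    obtain ⟨hqN, hq⟩ := Nat.mem_primesLE.1 hq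
    calc (N : ℝ) / 2 * (log q / q) = (N : ℝ) / 2 / q * log q := by ring
      _ ≤ _ := by gcongr; exact half_mul_div_le_natCast_div hq.pos hqN
  have hsum : (N : ℝ) / 2 * ∑ q ∈ Nat.primesLE N, log q / q ≤ N / 2 * (2 * log N) := by
    rw [mul_sum]
    linarith [sum_le_sum hterm, sum_primesLE_div_mul_log_le N]
  exact le_of_mul_le_mul_left hsum (by positivity)

theorem tsum_one_div_nat_rpow_le {s : ℝ} (hs : 1 < s) :
    ∑' n : ℕ, 1 / (n : ℝ) ^ s ≤ 1 + 1 / (s - 1) := by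
  have hnonneg : 0 ≤ ZetaAsymptotics.termTSum s :=
    tsum_nonneg fun n ↦ ZetaAsymptotics.term_nonneg (n + 1) s
  have hshift : ∑' n : ℕ, 1 / (n : ℝ) ^ s = ∑' n : ℕ, 1 / (n + 1 : ℝ) ^ s := by
    rw [(summable_one_div_nat_rpow.2 hs).tsum_eq_zero_add]
    simp [zero_rpow (zero_lt_one.trans hs).ne']
  rw [hshift]
  nlinarith [ZetaAsymptotics.zeta_limit_aux1 hs]

theorem prod_primesLE_inv_one_sub_rpow_le_tsum {s : ℝ} (hs : 1 < s) (N : ℕ) :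
    ∏ q ∈ Nat.primesLE N, (1 - 1 / (q : ℝ) ^ s)⁻¹ ≤ ∑' n : ℕ, 1 / (n : ℝ) ^ s := by
  let f : ℕ →* ℝ :=
    { toFun n := 1 / (n : ℝ) ^ s
      map_one' := by simp
      map_mul' a b := by
        rw [Nat.cast_mul, mul_rpow a.cast_nonneg b.cast_nonneg, one_div_mul_one_div] }
  have hf : Summable f := summable_one_div_nat_rpow.2 hs
  calc ∏ q ∈ Nat.primesLE N, (1 - f q)⁻¹ = ∑' m : (N + 1).smoothNumbers, f m :=
        EulerProduct.prod_primesBelow_geometric_eq_tsum_smoothNumbers hf (N + 1)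
    _ ≤ ∑' n, f n := hf.tsum_subtype_le f _ fun n ↦ by
        change (0 : ℝ) ≤ 1 / (n : ℝ) ^ s
        positivity

theorem div_sub_one_le_inv_one_sub_rpow_mul_exp {q δ : ℝ} (hq : 2 ≤ q) (hδ : 0 ≤ δ) :
    q / (q - 1) ≤ (1 - 1 / q ^ (1 + δ))⁻¹ * exp (2 * δ * (log q / q)) := by
  have hq₀ : 0 < q := by linarith
  set u := δ * log q with hu
  have hu₀ : 0 ≤ u := mul_nonneg hδ (log_nonneg (by linarith))
  have hpow : 1 / q ^ (1 + δ) = exp (-u) / q := by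
    rw [rpow_add hq₀, rpow_one, rpow_def_of_pos hq₀, mul_comm (log q), ← hu, exp_neg]
    field_simp
  have hlt : exp (-u) / q < 1 := by
    rw [div_lt_one hq₀]
    linarith [exp_le_one_iff.2 (neg_nonpos.2 hu₀)]
  rw [hpow, inv_mul_eq_div, div_le_div_iff₀ (by linarith) (sub_pos.2 hlt)]
  calc q * (1 - exp (-u) / q) = q - exp (-u) := by field_simp
    _ ≤ q - 1 + u := by linarith [one_sub_le_exp_neg u]
    _ ≤ (2 * u / q + 1) * (q - 1) := by
        have : 2 * u / q ≤ u := by rw [div_le_iff₀ hq₀]; nlinarith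
        have : (2 * u / q + 1) * (q - 1) = q - 1 + 2 * u - 2 * u / q := by field_simp; ring
        linarith
    _ ≤ exp (2 * u / q) * (q - 1) := by
        gcongr
        · linarith
        · exact add_one_le_exp _
    _ = exp (2 * δ * (log q / q)) * (q - 1) := by rw [hu]; ring_nf

/- Rankin's trick: with `δ = 1 / log N`, passing from the exponent `1` to `1 + δ` costs only a
bounded factor, and the sum over all integers converges. -/
theorem prod_primesLE_div_sub_one_le {N : ℕ} (hN : 1 < N) :
    ∏ q ∈ Nat.primesLE N, ((q : ℝ) / (q - 1)) ≤ exp 4 * (1 + log N) := by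
  have hlog : 0 < log N := log_pos (by exact_mod_cast hN)
  set δ := 1 / log N with hδ
  have hδ₀ : 0 < δ := by positivity
  have hq : ∀ q ∈ Nat.primesLE N, (2 : ℝ) ≤ q := fun q hq ↦ by
    exact_mod_cast Nat.two_le_of_mem_primesLE hq
  calc ∏ q ∈ Nat.primesLE N, ((q : ℝ) / (q - 1))
      ≤ ∏ q ∈ Nat.primesLE N, (1 - 1 / (q : ℝ) ^ (1 + δ))⁻¹ * exp (2 * δ * (log q / q)) :=
        prod_le_prod (fun q h ↦ div_nonneg (by linarith [hq q h]) (by linarith [hq q h]))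
          fun q h ↦ div_sub_one_le_inv_one_sub_rpow_mul_exp (hq q h) hδ₀.le
    _ = (∏ q ∈ Nat.primesLE N, (1 - 1 / (q : ℝ) ^ (1 + δ))⁻¹) *
          exp (2 * δ * ∑ q ∈ Nat.primesLE N, log q / q) := by
        rw [prod_mul_distrib, ← exp_sum, mul_sum]
    _ ≤ (1 + 1 / (1 + δ - 1)) * exp (2 * δ * (2 * log N)) := by
        gcongr
        · exact add_nonneg zero_le_one (one_div_nonneg.2 (by linarith))
        · exact (prod_primesLE_inv_one_sub_rpow_le_tsum (by linarith) N).trans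
            (tsum_one_div_nat_rpow_le (by linarith))
        · exact sum_primesLE_log_div_le N
    _ = exp 4 * (1 + log N) := by
        rw [hδ, add_sub_cancel_left, one_div_one_div, mul_comm]
        congr 2
        field_simp
        norm_num

theorem div_log_le_mul_primeCounting {n : ℕ} (hn : 2 ≤ n) :
    n / log n ≤ 10 * Nat.primeCounting n := by
  have hn' : (2 : ℝ) ≤ n := by exact_mod_cast hn
  have hlog : log (n + 1) ≤ log 3 + (n - 2) / 3 := by
    have := log_le_sub_one_of_pos (show (0 : ℝ) < (n + 1) / 3 by positivity)
    rw [log_div (by positivity) (by norm_num)] at this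
    linarith
  have hnum : (n : ℝ) ≤ 10 * (n * log 2 - log (n + 1)) := by
    nlinarith [log_two_gt_d9, log_three_lt_d9]
  calc (n : ℝ) / log n ≤ 10 * (n * log 2 - log (n + 1)) / log n := by
        gcongr
    _ = 10 * ((n * log 2 - log (n + 1)) / log n) := by ring
    _ ≤ 10 * Nat.primeCounting n := by gcongr; exact Chebyshev.pi_ge n

theorem log_le_two_mul_sqrt {x : ℝ} (hx : 0 ≤ x) : log x ≤ 2 * √x := by
  have := log_le_rpow_div hx (one_half_pos (α := ℝ))
  rw [← sqrt_eq_rpow] at this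
  linarith

theorem primeCounting_le_mul_div_log {n : ℕ} (hn : 2 ≤ n) :
    (Nat.primeCounting n : ℝ) ≤ 6 * (n / log n) := by
  have hn' : (1 : ℝ) < n := by exact_mod_cast hn
  have hlog : 0 < log n := log_pos hn'
  have hpi := Chebyshev.pi_le_log4_mul_div hn'
  rw [Nat.floor_natCast, log_sqrt n.cast_nonneg] at hpi
  have hsqrt : √n ≤ 2 * (n / log n) := by
    rw [← mul_div_assoc, le_div_iff₀ hlog]
    nlinarith [log_le_two_mul_sqrt n.cast_nonneg, mul_self_sqrt (n.cast_nonneg (α := ℝ)),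
      sqrt_nonneg (n : ℝ)]
  have hmain : log 4 * n / (log n / 2) ≤ 4 * (n / log n) := by
    calc log 4 * n / (log n / 2) = 2 * log 4 * (n / log n) := by field_simp
      _ ≤ 4 * (n / log n) := by
          gcongr
          linarith [log_four_eq, log_two_lt_d9]
  linarith

theorem dvd_prod_range_mul_add_of_coprime {Q m N : ℕ} (hQ : Q.Coprime m) (hm : m ∣ N !) (a : ℕ) :
    m ∣ ∏ k ∈ range N, (Q * k + a) := by
  have : NeZero m := ⟨ne_zero_of_dvd_ne_zero N.factorial_ne_zero hm⟩
  set b : ℕ := ((Q : ZMod m)⁻¹ * a).val with hb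
  have hQb : (Q : ZMod m) * b = a := by
    rw [hb, ZMod.natCast_zmod_val, ← mul_assoc, ZMod.coe_mul_inv_eq_one Q hQ, one_mul]
  have hasc : ((b.ascFactorial N : ℕ) : ZMod m) = 0 :=
    (ZMod.natCast_eq_zero_iff _ _).2 (hm.trans (Nat.factorial_dvd_ascFactorial b N))
  rw [Nat.ascFactorial_eq_prod_range, Nat.cast_prod] at hasc
  rw [← ZMod.natCast_eq_zero_iff, Nat.cast_prod]
  calc ∏ k ∈ range N, ((Q * k + a : ℕ) : ZMod m)
      = ∏ k ∈ range N, ((Q : ZMod m) * ((b + k : ℕ) : ZMod m)) :=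
        prod_congr rfl fun k _ ↦ by push_cast; rw [← hQb]; ring
    _ = 0 := by rw [prod_mul_distrib, hasc, mul_zero]

theorem le_of_prime_pow_dvd_factorial {r k N : ℕ} (hr : r.Prime) (h : r ^ k ∣ N !) : k ≤ N := by
  have : Fact r.Prime := ⟨hr⟩
  rcases eq_or_ne N 0 with rfl | hN
  · simpa [hr.ne_one] using h
  calc k ≤ padicValNat r N ! := (padicValNat_dvd_iff_le N.factorial_ne_zero).1 h
    _ ≤ (r - 1) * padicValNat r N ! :=
        Nat.le_mul_of_pos_left _ (Nat.sub_pos_of_lt hr.one_lt)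
    _ ≤ N := (sub_one_mul_padicValNat_factorial_lt_of_ne_zero r hN).le

theorem factorial_dvd_pow_mul_prod_range (Q N a : ℕ) :
    N ! ∣ Q ^ N * ∏ k ∈ range N, (Q * k + a) := by
  rw [Nat.dvd_iff_prime_pow_dvd_dvd]
  intro r k hr hk
  by_cases hrQ : r ∣ Q
  · exact .mul_right ((pow_dvd_pow r (le_of_prime_pow_dvd_factorial hr hk)).trans
      (pow_dvd_pow_of_dvd hrQ N)) _
  · have hcop : Q.Coprime (r ^ k) := (((hr.coprime_iff_not_dvd).2 hrQ).pow_left k).symm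
    exact .mul_left (dvd_prod_range_mul_add_of_coprime hcop hk a) _

theorem prod_range_mul_add_le {Q a : ℕ} (ha : a ≤ Q) (N : ℕ) :
    ∏ k ∈ range N, (Q * k + a) ≤ Q ^ N * N ! := by
  calc ∏ k ∈ range N, (Q * k + a) ≤ ∏ k ∈ range N, Q * (k + 1) :=
        prod_le_prod' fun k _ ↦ by rw [mul_add_one]; gcongr
    _ = Q ^ N * N ! := by
        rw [prod_mul_distrib, prod_const, card_range, prod_range_add_one_eq_factorial]

-- `∏ p` is coprime to `N !`, so its product with `N !` divides `Q ^ N * ∏ (Q * k + a)`.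
theorem prod_primes_mul_add_le_pow {Q N a : ℕ} (ha : 0 < a) (haQ : a ≤ Q) {T : Finset ℕ}
    (hT : ∀ p ∈ T, p.Prime ∧ N < p ∧ ∃ k < N, p = Q * k + a) :
    ∏ p ∈ T, p ≤ Q ^ (2 * N) := by
  have hdvd : ∏ p ∈ T, p ∣ ∏ k ∈ range N, (Q * k + a) := by
    refine prod_dvd_of_isRelPrime (fun p hp q hq hpq ↦ Nat.coprime_iff_isRelPrime.1
      ((Nat.coprime_primes (hT p hp).1 (hT q hq).1).2 hpq)) fun p hp ↦ ?_
    obtain ⟨-, -, k, hk, rfl⟩ := hT p hp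
    exact dvd_prod_of_mem (fun k ↦ Q * k + a) (mem_range.2 hk)
  have hcop : (∏ p ∈ T, p).Coprime N ! := Nat.Coprime.prod_left fun p hp ↦ by
    obtain ⟨hp, hNp, -⟩ := hT p hp
    rwa [hp.coprime_iff_not_dvd, hp.dvd_factorial, not_le]
  have hpos : 0 < Q ^ N * ∏ k ∈ range N, (Q * k + a) :=
    Nat.mul_pos (pow_pos (ha.trans_le haQ) N) (prod_pos fun k _ ↦ by positivity)
  refine Nat.le_of_mul_le_mul_right ?_ N.factorial_pos
  calc (∏ p ∈ T, p) * N ! ≤ Q ^ N * ∏ k ∈ range N, (Q * k + a) :=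
        Nat.le_of_dvd hpos (hcop.mul_dvd_of_dvd_of_dvd (hdvd.mul_left _)
          (factorial_dvd_pow_mul_prod_range Q N a))
    _ ≤ Q ^ N * (Q ^ N * N !) := by gcongr; exact prod_range_mul_add_le haQ N
    _ = Q ^ (2 * N) * N ! := by ring

theorem card_mul_log_le_of_prime_mul_add {Q N a : ℕ} (ha : 0 < a) (haQ : a ≤ Q) {T : Finset ℕ}
    (hT : ∀ p ∈ T, p.Prime ∧ N < p ∧ ∃ k < N, p = Q * k + a) :
    #T * log N ≤ 2 * N * log Q := by
  rcases Nat.eq_zero_or_pos N with rfl | hN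
  · simp
  have hpow : N ^ #T ≤ Q ^ (2 * N) :=
    (pow_card_le_prod T _ N fun p hp ↦ (hT p hp).2.1.le).trans
      (prod_primes_mul_add_le_pow ha haQ hT)
  have hlog : log ((N : ℝ) ^ #T) ≤ log ((Q : ℝ) ^ (2 * N)) :=
    log_le_log (by positivity) (mod_cast hpow)
  simpa [log_pow] using hlog

theorem exists_modEq_pos_le {Q : ℕ} (hQ : 0 < Q) (a : ℕ) : ∃ b, 0 < b ∧ b ≤ Q ∧ b ≡ a [MOD Q] := by
  rcases Nat.eq_zero_or_pos (a % Q) with h | h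
  · exact ⟨Q, hQ, le_rfl, by rw [Nat.ModEq, h, Nat.mod_self]⟩
  · exact ⟨a % Q, h, (Nat.mod_lt a hQ).le, Nat.mod_modEq a Q⟩

theorem card_primesLE_modEq_mul_log_le {n Q N : ℕ} (hQ : 0 < Q) (hQN : Q ≤ N) (hN : n < Q * N)
    (a : ℕ) :
    #{p ∈ Nat.primesLE n | p ≡ a [MOD Q]} * log N ≤
      2 * N * log Q + Nat.primeCounting N * log N := by
  obtain ⟨b, hb, hbQ, hba⟩ := exists_modEq_pos_le hQ a
  set T : Finset ℕ := {p ∈ Nat.primesLE n | p ≡ a [MOD Q] ∧ N < p} with hT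
  have hsub : {p ∈ Nat.primesLE n | p ≡ a [MOD Q]} ⊆ T ∪ Nat.primesLE N := by
    intro p hp
    simp only [hT, mem_union, mem_filter, Nat.mem_primesLE] at hp ⊢
    by_cases h : N < p
    · exact .inl ⟨hp.1, hp.2, h⟩
    · exact .inr ⟨not_lt.1 h, hp.1.2⟩
  have hcard : (#{p ∈ Nat.primesLE n | p ≡ a [MOD Q]} : ℝ) ≤ #T + Nat.primeCounting N := by
    rw [← Nat.primesLE_card_eq_primeCounting]
    exact_mod_cast (card_le_card hsub).trans (card_union_le _ _)
  have hTlog : #T * log N ≤ 2 * N * log Q := by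
    refine card_mul_log_le_of_prime_mul_add hb hbQ fun p hp ↦ ?_
    simp only [hT, mem_filter, Nat.mem_primesLE] at hp
    obtain ⟨⟨hpn, hp⟩, hpa, hNp⟩ := hp
    have hbp : b ≤ p := hbQ.trans (hQN.trans hNp.le)
    obtain ⟨k, hk⟩ := (Nat.modEq_iff_dvd' hbp).1 (hba.trans hpa.symm)
    refine ⟨hp, hNp, k, Nat.lt_of_mul_lt_mul_left (a := Q) ?_, ?_⟩ <;> omega
  calc #{p ∈ Nat.primesLE n | p ≡ a [MOD Q]} * log N
      ≤ (#T + Nat.primeCounting N) * log N := by gcongr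
    _ ≤ 2 * N * log Q + Nat.primeCounting N * log N := by rw [add_mul]; gcongr

theorem two_mul_log_add_six_le {x : ℝ} (hx : 1 ≤ x) : 2 * log x + 6 ≤ 6 * √x := by
  have h := log_le_sub_one_of_pos (show 0 < √x by positivity)
  rw [log_sqrt (by positivity)] at h
  linarith [one_le_sqrt.2 hx]

-- A weak Brun–Titchmarsh inequality, losing a factor `√Q`.
theorem card_primesLE_modEq_le {n Q : ℕ} (hn : 2 ≤ n) (hQ : 0 < Q) (hQn : Q ^ 2 ≤ n) (a : ℕ) :
    (#{p ∈ Nat.primesLE n | p ≡ a [MOD Q]} : ℝ) ≤ 240 * Nat.primeCounting n / √Q := by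
  set N := n / Q + 1 with hNdef
  have hQdiv : Q ≤ n / Q := (Nat.le_div_iff_mul_le hQ).2 (by rwa [← sq])
  have hnQN : n < Q * N := Nat.lt_mul_div_succ n hQ
  have hQ1 : (1 : ℝ) ≤ Q := mod_cast hQ
  have hN : (N : ℝ) ≤ 2 * (n / Q) := by
    have h1 : (1 : ℝ) ≤ (n / Q : ℕ) := mod_cast hQ.trans_le hQdiv
    have h2 : ((n / Q : ℕ) : ℝ) ≤ n / Q := Nat.cast_div_le
    rw [hNdef]; push_cast; linarith
  have hlogn : 0 < log n := log_pos (mod_cast hn)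
  have hlogN : log n / 2 ≤ log N := by
    have hle : (n : ℝ) ≤ (N : ℝ) ^ 2 := mod_cast (show n ≤ N ^ 2 by nlinarith)
    have h := log_le_log (by positivity) hle
    rw [log_pow] at h
    push_cast at h
    linarith
  have hlogN0 : 0 < log N := by linarith
  have hπN : Nat.primeCounting N * log N ≤ 6 * N := by
    rw [← le_div_iff₀ hlogN0, mul_div_assoc]
    exact primeCounting_le_mul_div_log (by omega)
  calc (#{p ∈ Nat.primesLE n | p ≡ a [MOD Q]} : ℝ)
      ≤ 6 * √Q * N / log N := by
        rw [le_div_iff₀ hlogN0]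
        have h := card_primesLE_modEq_mul_log_le hQ (hQdiv.trans (n / Q).le_succ) hnQN a
        nlinarith [two_mul_log_add_six_le hQ1, N.cast_nonneg (α := ℝ)]
    _ ≤ 6 * √Q * (2 * (n / Q)) / (log n / 2) := by gcongr
    _ = 24 * (n / log n) / √Q := by
        have h : √(Q : ℝ) ^ 2 = Q := sq_sqrt Q.cast_nonneg
        field_simp
        rw [h]; ring
    _ ≤ 24 * (10 * Nat.primeCounting n) / √Q := by
        gcongr; exact div_log_le_mul_primeCounting hn
    _ = 240 * Nat.primeCounting n / √Q := by ring

theorem dvd_eval_iff_of_dvd_sub {R : Type*} [CommRing R] {m a b : R} (h : m ∣ a - b) (f : R[X]) :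
    m ∣ f.eval a ↔ m ∣ f.eval b :=
  dvd_iff_dvd_of_dvd_sub (h.trans (sub_dvd_eval_sub a b f))

theorem natCast_dvd_eval_mod_iff {q Q : ℕ} (hqQ : q ∣ Q) (f : ℤ[X]) (a : ℕ) :
    (q : ℤ) ∣ f.eval ((a % Q : ℕ) : ℤ) ↔ (q : ℤ) ∣ f.eval (a : ℤ) :=
  dvd_eval_iff_of_dvd_sub (Nat.modEq_iff_dvd.1 ((Nat.mod_modEq a Q).of_dvd hqQ).symm) f

theorem map_intCastRingHom_zmod_ne_zero {f : ℤ[X]} {q : ℕ} (hf : ¬ (q : ℤ) ∣ f.content) :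
    f.map (Int.castRingHom (ZMod q)) ≠ 0 := by
  refine fun h ↦ hf <| dvd_content_iff_C_dvd.2 <| (C_dvd_iff_dvd_coeff _ f).2 fun i ↦ ?_
  rw [← ZMod.intCast_zmod_eq_zero_iff_dvd, ← eq_intCast (Int.castRingHom (ZMod q)),
    ← coeff_map, h, coeff_zero]

theorem card_range_dvd_eval_le_natDegree {f : ℤ[X]} {q : ℕ} (hq : q.Prime)
    (hf : ¬ (q : ℤ) ∣ f.content) :
    #{a ∈ range q | (q : ℤ) ∣ f.eval ((a : ℕ) : ℤ)} ≤ f.natDegree := by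
  have : Fact q.Prime := ⟨hq⟩
  set g := f.map (Int.castRingHom (ZMod q))
  have hroots : #{a ∈ range q | (q : ℤ) ∣ f.eval ((a : ℕ) : ℤ)} ≤ #g.roots.toFinset := by
    refine card_le_card_of_injOn (fun a : ℕ ↦ (a : ZMod q)) (fun a ha ↦ ?_) fun a ha b hb hab ↦ ?_
    · rw [mem_coe, Multiset.mem_toFinset, mem_roots (map_intCastRingHom_zmod_ne_zero hf),
        IsRoot.def]
      simpa [ZMod.intCast_zmod_eq_zero_iff_dvd] using
        (eval_intCast_map (Int.castRingHom (ZMod q)) f a).trans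
          ((ZMod.intCast_zmod_eq_zero_iff_dvd _ q).2 (mem_filter.1 ha).2)
    · exact ((ZMod.natCast_eq_natCast_iff a b q).1 hab).eq_of_lt_of_lt
        (mem_range.1 (mem_filter.1 ha).1) (mem_range.1 (mem_filter.1 hb).1)
  calc #{a ∈ range q | (q : ℤ) ∣ f.eval ((a : ℕ) : ℤ)} ≤ #g.roots.toFinset := hroots
    _ ≤ Multiset.card g.roots := Multiset.toFinset_card_le _
    _ ≤ g.natDegree := card_roots' g
    _ ≤ f.natDegree := natDegree_map_le

theorem card_range_prod_forall_dvd_eval_le (f : ℤ[X]) {s : Finset ℕ}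
    (hs : (s : Set ℕ).Pairwise Nat.Coprime) :
    #{a ∈ range (∏ q ∈ s, q) | ∀ q ∈ s, (q : ℤ) ∣ f.eval ((a : ℕ) : ℤ)} ≤
      ∏ q ∈ s, #{a ∈ range q | (q : ℤ) ∣ f.eval ((a : ℕ) : ℤ)} := by
  rw [← card_pi]
  refine card_le_card_of_injOn (fun a q _ ↦ a % q) (fun a ha ↦ ?_) fun a ha b hb hab ↦ ?_
  · obtain ⟨haQ, ha⟩ := mem_filter.1 ha
    refine mem_coe.2 (mem_pi.2 fun q hq ↦ mem_filter.2 ⟨mem_range.2 (Nat.mod_lt _ ?_), ?_⟩)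
    · exact Nat.pos_of_dvd_of_pos (dvd_prod_of_mem _ hq) (Nat.zero_lt_of_lt (mem_range.1 haQ))
    · exact (natCast_dvd_eval_mod_iff dvd_rfl f a).2 (ha q hq)
  · have hdvd : ((∏ q ∈ s, q : ℕ) : ℤ) ∣ b - a := by
      rw [Nat.cast_prod]
      exact prod_dvd_of_coprime (fun p hp q hq hpq ↦ (hs hp hq hpq).isCoprime)
        fun q hq ↦ Nat.modEq_iff_dvd.1 (show a ≡ b [MOD q] from congrFun₂ hab q hq)
    exact (Nat.modEq_iff_dvd.2 hdvd).eq_of_lt_of_lt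
      (mem_range.1 (mem_filter.1 ha).1) (mem_range.1 (mem_filter.1 hb).1)

theorem pairwise_coprime_of_prime {s : Finset ℕ} (hs : ∀ q ∈ s, q.Prime) :
    (s : Set ℕ).Pairwise Nat.Coprime :=
  fun p hp q hq hpq ↦ (Nat.coprime_primes (hs p hp) (hs q hq)).2 hpq

theorem card_range_prod_primes_forall_dvd_eval_le {f : ℤ[X]} {s : Finset ℕ}
    (hs : ∀ q ∈ s, q.Prime ∧ ¬ (q : ℤ) ∣ f.content) :
    #{a ∈ range (∏ q ∈ s, q) | ∀ q ∈ s, (q : ℤ) ∣ f.eval ((a : ℕ) : ℤ)} ≤ f.natDegree ^ #s :=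
  (card_range_prod_forall_dvd_eval_le f (pairwise_coprime_of_prime fun q hq ↦ (hs q hq).1)).trans
    (prod_le_pow_card _ _ _ fun q hq ↦ card_range_dvd_eval_le_natDegree (hs q hq).1 (hs q hq).2)

theorem card_primesLE_mod_mem_le {n Q : ℕ} (hn : 2 ≤ n) (hQ : 0 < Q) (hQn : Q ^ 2 ≤ n)
    (R : Finset ℕ) :
    (#{p ∈ Nat.primesLE n | p % Q ∈ R} : ℝ) ≤ #R * (240 * Nat.primeCounting n / √Q) := by
  have hmaps : Set.MapsTo (· % Q) ({p ∈ Nat.primesLE n | p % Q ∈ R} : Finset ℕ) (R : Set ℕ) :=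
    fun p hp ↦ (mem_filter.1 hp).2
  rw [card_eq_sum_card_fiberwise hmaps, Nat.cast_sum, ← nsmul_eq_mul]
  refine sum_le_card_nsmul _ _ _ fun a _ ↦ le_trans ?_ (card_primesLE_modEq_le hn hQ hQn a)
  rw [filter_filter]
  exact_mod_cast card_le_card (monotone_filter_right _ fun p _ hp ↦ by
    rw [← hp.2]; exact (Nat.mod_modEq p Q).symm)

theorem card_primesLE_forall_dvd_eval_le {f : ℤ[X]} {n : ℕ} (hn : 2 ≤ n) {s : Finset ℕ}
    (hs : ∀ q ∈ s, q.Prime ∧ ¬ (q : ℤ) ∣ f.content) (hsn : (∏ q ∈ s, q) ^ 2 ≤ n) :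
    (#{p ∈ Nat.primesLE n | ∀ q ∈ s, (q : ℤ) ∣ f.eval ((p : ℕ) : ℤ)} : ℝ) ≤
      240 * Nat.primeCounting n * ∏ q ∈ s, (f.natDegree / √q) := by
  set Q := ∏ q ∈ s, q with hQdef
  have hQ : 0 < Q := prod_pos fun q hq ↦ (hs q hq).1.pos
  set R : Finset ℕ := {a ∈ range Q | ∀ q ∈ s, (q : ℤ) ∣ f.eval ((a : ℕ) : ℤ)}
  have hR_card : #R ≤ f.natDegree ^ #s := card_range_prod_primes_forall_dvd_eval_le hs
  have hmod : {p ∈ Nat.primesLE n | ∀ q ∈ s, (q : ℤ) ∣ f.eval ((p : ℕ) : ℤ)} ⊆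
      {p ∈ Nat.primesLE n | p % Q ∈ R} :=
    monotone_filter_right _ fun p _ hp ↦ mem_filter.2 ⟨mem_range.2 (Nat.mod_lt p hQ),
      fun q hq ↦ (natCast_dvd_eval_mod_iff (dvd_prod_of_mem _ hq) f p).2 (hp q hq)⟩
  calc (#{p ∈ Nat.primesLE n | ∀ q ∈ s, (q : ℤ) ∣ f.eval ((p : ℕ) : ℤ)} : ℝ)
      ≤ #{p ∈ Nat.primesLE n | p % Q ∈ R} := mod_cast card_le_card hmod
    _ ≤ #R * (240 * Nat.primeCounting n / √Q) := card_primesLE_mod_mem_le hn hQ hsn R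
    _ ≤ f.natDegree ^ #s * (240 * Nat.primeCounting n / √Q) := by gcongr; exact_mod_cast hR_card
    _ = 240 * Nat.primeCounting n * ∏ q ∈ s, (f.natDegree / √q) := by
        rw [prod_div_distrib, prod_const, hQdef, Nat.cast_prod,
          sqrt_prod s fun q _ ↦ Nat.cast_nonneg q]
        ring

/-- The primes in the interval `(y, z]`. -/
noncomputable def primesIoc (y z : ℝ) : Finset ℕ := {q ∈ Nat.primesLE ⌊z⌋₊ | y < (q : ℝ)}

/-- The additive function `∑ 1 / q` over the `q ∈ P` dividing `m`, whose exponential moments over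
the values of a polynomial at primes control the totient ratio of these values. -/
noncomputable def reciprocalSumDvd (P : Finset ℕ) (m : ℤ) : ℝ :=
  ∑ q ∈ P with ((q : ℕ) : ℤ) ∣ m, 1 / (q : ℝ)

theorem mem_primesIoc {y z : ℝ} {q : ℕ} (hz : 0 ≤ z) :
    q ∈ primesIoc y z ↔ q.Prime ∧ y < q ∧ (q : ℝ) ≤ z := by
  rw [primesIoc, mem_filter, Nat.mem_primesLE, Nat.le_floor_iff hz]
  tauto

-- The primorial of `log n / 4` is at most `4 ^ (log n / 4)`, whose square is `n ^ log 2`.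
theorem prod_primesIoc_log_div_four_sq_le {n : ℕ} (hn : n ≠ 0) (y : ℝ) :
    (∏ q ∈ primesIoc y (log n / 4), q) ^ 2 ≤ n := by
  set k := ⌊log n / 4⌋₊
  have hprod : ∏ q ∈ primesIoc y (log n / 4), q ≤ 4 ^ k := by
    refine le_trans ?_ (primorial_le_four_pow k)
    rw [primorial_eq_prod_primesLE]
    exact prod_le_prod_of_subset_of_one_le' (filter_subset _ _)
      fun q hq _ ↦ (Nat.prime_of_mem_primesLE hq).pos
  have hk : (k : ℝ) ≤ log n / 4 := Nat.floor_le (by positivity)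
  have hlog : log (((4 : ℝ) ^ k) ^ 2) ≤ log n := by
    rw [log_pow, log_pow, log_four_eq]
    push_cast
    nlinarith [log_two_lt_d9, k.cast_nonneg (α := ℝ)]
  have hpow : ((4 : ℝ) ^ k) ^ 2 ≤ n := (log_le_log_iff (by positivity) (by positivity)).1 hlog
  exact (Nat.pow_le_pow_left hprod 2).trans (mod_cast hpow)

theorem exp_mul_reciprocalSumDvd (l : ℝ) (P : Finset ℕ) (m : ℤ) :
    exp (l * reciprocalSumDvd P m) =
      ∑ s ∈ P.powerset, if ∀ q ∈ s, (q : ℤ) ∣ m then ∏ q ∈ s, (exp (l / q) - 1) else 0 := by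
  calc exp (l * reciprocalSumDvd P m)
      = ∏ q ∈ P, (1 + if (q : ℤ) ∣ m then exp (l / q) - 1 else 0) := by
        rw [reciprocalSumDvd, mul_sum, exp_sum, prod_filter]
        refine prod_congr rfl fun q _ ↦ ?_
        split_ifs
        · rw [mul_one_div]; ring
        · ring
    _ = _ := by
        rw [prod_one_add]
        exact sum_congr rfl fun s _ ↦ prod_ite_zero

theorem exp_rpow_div_sub_one_div_sqrt_le {y q : ℝ} (hy : 0 ≤ y) (hyq : y ≤ q) (hq : 1 ≤ q) :
    (exp (y ^ (1 / 4 : ℝ) / q) - 1) / √q ≤ 2 * (1 / q ^ (5 / 4 : ℝ)) := by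
  have hq0 : 0 < q := by positivity
  have hyq4 : y ^ (1 / 4 : ℝ) ≤ q ^ (1 / 4 : ℝ) := rpow_le_rpow hy hyq (by norm_num)
  have hle_one : y ^ (1 / 4 : ℝ) / q ≤ 1 :=
    (div_le_one hq0).2 (hyq4.trans (rpow_le_self_of_one_le hq (by norm_num)))
  have habs : |y ^ (1 / 4 : ℝ) / q| = y ^ (1 / 4 : ℝ) / q := abs_of_nonneg (by positivity)
  have hexp : exp (y ^ (1 / 4 : ℝ) / q) - 1 ≤ 2 * (y ^ (1 / 4 : ℝ) / q) := by
    simpa only [habs] using (le_abs_self _).trans (abs_exp_sub_one_le (habs.trans_le hle_one))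
  calc (exp (y ^ (1 / 4 : ℝ) / q) - 1) / √q ≤ 2 * (q ^ (1 / 4 : ℝ) / q) / √q := by
        gcongr; exact hexp.trans (by gcongr)
    _ = 2 * q ^ (1 / 4 - 1 - 1 / 2 : ℝ) := by
        rw [sqrt_eq_rpow, rpow_sub hq0, rpow_sub_one hq0.ne', mul_div_assoc]
    _ = 2 * (1 / q ^ (5 / 4 : ℝ)) := by
        rw [one_div (q ^ _), ← rpow_neg hq0.le]; norm_num

theorem prod_one_add_exp_rpow_div_sub_one_mul_le {d y : ℝ} (hd : 0 ≤ d) (hy : 0 ≤ y)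
    {P : Finset ℕ} (hP : ∀ q ∈ P, 1 ≤ q ∧ y ≤ q) :
    ∏ q ∈ P, (1 + (exp (y ^ (1 / 4 : ℝ) / q) - 1) * (d / √q)) ≤ exp (10 * d) := by
  have hsum : ∑ q ∈ P, 1 / (q : ℝ) ^ (5 / 4 : ℝ) ≤ 5 := by
    have hs : (1 : ℝ) < 5 / 4 := by norm_num
    calc ∑ q ∈ P, 1 / (q : ℝ) ^ (5 / 4 : ℝ) ≤ ∑' q : ℕ, 1 / (q : ℝ) ^ (5 / 4 : ℝ) :=
          (summable_one_div_nat_rpow.2 hs).sum_le_tsum P fun q _ ↦ by positivity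
      _ ≤ 5 := (tsum_one_div_nat_rpow_le hs).trans (by norm_num)
  have hnonneg (q : ℕ) : 0 ≤ (exp (y ^ (1 / 4 : ℝ) / q) - 1) * (d / √q) :=
    mul_nonneg (sub_nonneg.2 (one_le_exp (by positivity))) (by positivity)
  refine (prod_one_add_le_exp_sum P hnonneg).trans (exp_le_exp.2 ?_)
  calc ∑ q ∈ P, (exp (y ^ (1 / 4 : ℝ) / q) - 1) * (d / √q)
      ≤ ∑ q ∈ P, 2 * d * (1 / (q : ℝ) ^ (5 / 4 : ℝ)) := sum_le_sum fun q hq ↦ by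
        have h := exp_rpow_div_sub_one_div_sqrt_le hy (hP q hq).2 (mod_cast (hP q hq).1)
        calc _ = d * ((exp (y ^ (1 / 4 : ℝ) / q) - 1) / √q) := by ring
          _ ≤ d * (2 * (1 / (q : ℝ) ^ (5 / 4 : ℝ))) := by gcongr
          _ = _ := by ring
    _ = 2 * d * ∑ q ∈ P, 1 / (q : ℝ) ^ (5 / 4 : ℝ) := by rw [mul_sum]
    _ ≤ 2 * d * 5 := by gcongr
    _ = 10 * d := by ring

theorem sum_exp_rpow_mul_reciprocalSumDvd_eval_le {f : ℤ[X]} {n : ℕ} (hn : 2 ≤ n) {y : ℝ}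
    (hy : 0 ≤ y) {P : Finset ℕ} (hP : ∀ q ∈ P, q.Prime ∧ ¬ (q : ℤ) ∣ f.content)
    (hyP : ∀ q ∈ P, y ≤ q) (hPn : (∏ q ∈ P, q) ^ 2 ≤ n) :
    ∑ p ∈ Nat.primesLE n, exp (y ^ (1 / 4 : ℝ) * reciprocalSumDvd P (f.eval (p : ℤ))) ≤
      240 * exp (10 * f.natDegree) * Nat.primeCounting n := by
  set c : ℕ → ℝ := fun q ↦ exp (y ^ (1 / 4 : ℝ) / q) - 1
  have hc (q : ℕ) : 0 ≤ c q := sub_nonneg.2 (one_le_exp (by positivity))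
  have hterm : ∀ s ∈ P.powerset, ∑ p ∈ Nat.primesLE n,
      (if ∀ q ∈ s, (q : ℤ) ∣ f.eval (p : ℤ) then ∏ q ∈ s, c q else 0) ≤
        240 * Nat.primeCounting n * ∏ q ∈ s, c q * (f.natDegree / √q) := by
    intro s hs
    rw [mem_powerset] at hs
    have hsn : (∏ q ∈ s, q) ^ 2 ≤ n := (Nat.pow_le_pow_left
      (prod_le_prod_of_subset_of_one_le' hs fun q hq _ ↦ (hP q hq).1.pos) 2).trans hPn
    rw [← sum_filter, sum_const, nsmul_eq_mul]
    calc _ ≤ (240 * Nat.primeCounting n * ∏ q ∈ s, (f.natDegree / √q)) * ∏ q ∈ s, c q :=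
          mul_le_mul_of_nonneg_right
            (card_primesLE_forall_dvd_eval_le hn (fun q hq ↦ hP q (hs hq)) hsn)
            (prod_nonneg fun q _ ↦ hc q)
      _ = 240 * Nat.primeCounting n * ∏ q ∈ s, c q * (f.natDegree / √q) := by
          rw [prod_mul_distrib]; ring
  simp only [exp_mul_reciprocalSumDvd]
  rw [sum_comm]
  calc _ ≤ ∑ s ∈ P.powerset, 240 * Nat.primeCounting n * ∏ q ∈ s, c q * (f.natDegree / √q) :=
        sum_le_sum hterm
    _ = 240 * Nat.primeCounting n * ∏ q ∈ P, (1 + c q * (f.natDegree / √q)) := by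
        rw [← mul_sum, ← prod_one_add]
    _ ≤ 240 * Nat.primeCounting n * exp (10 * f.natDegree) := by
        gcongr
        exact prod_one_add_exp_rpow_div_sub_one_mul_le f.natDegree.cast_nonneg hy
          fun q hq ↦ ⟨(hP q hq).1.pos, hyP q hq⟩
    _ = 240 * exp (10 * f.natDegree) * Nat.primeCounting n := by ring

theorem abs_eval_le_sum_abs_coeff_mul_pow {R : Type*} [CommRing R] [LinearOrder R]
    [IsStrictOrderedRing R] (f : R[X]) {x b : R} (hx : |x| ≤ b) (hb : 1 ≤ b) :
    |f.eval x| ≤ (∑ i ∈ range (f.natDegree + 1), |f.coeff i|) * b ^ f.natDegree := by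
  rw [eval_eq_sum_range, sum_mul]
  refine (abs_sum_le_sum_abs _ _).trans (sum_le_sum fun i hi ↦ ?_)
  rw [abs_mul, abs_pow]
  gcongr
  calc |x| ^ i ≤ b ^ i := by gcongr
    _ ≤ b ^ f.natDegree := pow_le_pow_right₀ hb (Nat.lt_succ_iff.1 (mem_range.1 hi))

theorem exists_log_toNat_eval_le (f : ℤ[X]) :
    ∃ K : ℝ, ∀ n : ℕ, 2 ≤ n → ∀ p ≤ n, log (f.eval (p : ℤ)).toNat ≤ K * log n := by
  set B : ℤ := 1 + ∑ i ∈ range (f.natDegree + 1), |f.coeff i|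
  have hB1 : (1 : ℝ) ≤ B := by
    have h : 0 ≤ ∑ i ∈ range (f.natDegree + 1), |f.coeff i| := sum_nonneg fun i _ ↦ abs_nonneg _
    exact_mod_cast le_add_of_nonneg_right h
  refine ⟨log B / log 2 + f.natDegree, fun n hn p hp ↦ ?_⟩
  have hn1 : (1 : ℝ) ≤ n := mod_cast one_le_two.trans hn
  have hle : ((f.eval (p : ℤ)).toNat : ℝ) ≤ B * n ^ f.natDegree := by
    have h := abs_eval_le_sum_abs_coeff_mul_pow f (x := (p : ℤ)) (b := (n : ℤ))
      (by rw [Nat.abs_cast]; exact_mod_cast hp) (by exact_mod_cast hn1)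
    have hint : ((f.eval (p : ℤ)).toNat : ℤ) ≤ B * n ^ f.natDegree :=
      calc ((f.eval (p : ℤ)).toNat : ℤ) ≤ |f.eval (p : ℤ)| := by
            rw [Int.toNat_eq_max]; exact max_le (le_abs_self _) (abs_nonneg _)
        _ ≤ _ := h
        _ ≤ B * n ^ f.natDegree := by gcongr; linarith
    exact_mod_cast hint
  have hlog2 : 0 < log 2 := log_pos one_lt_two
  have hlogn : log 2 ≤ log n := log_le_log two_pos (mod_cast hn)
  rcases Nat.eq_zero_or_pos (f.eval (p : ℤ)).toNat with h0 | h0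
  · have := log_nonneg hB1
    rw [h0, Nat.cast_zero, log_zero]
    positivity
  calc log (f.eval (p : ℤ)).toNat ≤ log (B * n ^ f.natDegree) := log_le_log (mod_cast h0) hle
    _ = log B / log 2 * log 2 + f.natDegree * log n := by
        rw [log_mul (by positivity) (by positivity), log_pow, div_mul_cancel₀ _ hlog2.ne']
    _ ≤ log B / log 2 * log n + f.natDegree * log n := by
        gcongr
    _ = (log B / log 2 + f.natDegree) * log n := by rw [add_mul]

theorem natCast_div_totient {m : ℕ} (hm : m ≠ 0) :
    (m : ℝ) / φ m = ∏ q ∈ m.primeFactors, ((q : ℝ) / (q - 1)) := by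
  have htotient : (φ m : ℝ) = m * ∏ q ∈ m.primeFactors, (1 - (q : ℝ)⁻¹) := by
    rw [← Rat.cast_natCast, Nat.totient_eq_mul_prod_factors]
    push_cast
    rfl
  rw [htotient, div_mul_cancel_left₀ (mod_cast hm), ← prod_inv_distrib]
  refine prod_congr rfl fun q hq ↦ ?_
  have hq0 : (q : ℝ) ≠ 0 := mod_cast (Nat.prime_of_mem_primeFactors hq).ne_zero
  rw [← inv_div, sub_div, div_self hq0, one_div]

theorem one_le_div_sub_one {q : ℝ} (hq : 1 < q) : 1 ≤ q / (q - 1) := by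
  rw [le_div_iff₀ (by linarith)]; linarith

theorem div_sub_one_le_exp {q : ℝ} (hq : 2 ≤ q) : q / (q - 1) ≤ exp (2 * (1 / q)) := by
  refine le_trans ?_ (add_one_le_exp _)
  rw [mul_one_div, ← sub_nonneg,
    show 2 / q + 1 - q / (q - 1) = (q - 2) / (q * (q - 1)) by
      have : q - 1 ≠ 0 := by linarith
      field_simp; ring]
  exact div_nonneg (by linarith) (mul_nonneg (by linarith) (by linarith))

theorem prod_div_sub_one_le_exp_sum {S : Finset ℕ} (hS : ∀ q ∈ S, 2 ≤ q) :
    ∏ q ∈ S, ((q : ℝ) / (q - 1)) ≤ exp (2 * ∑ q ∈ S, 1 / (q : ℝ)) := by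
  rw [mul_sum, exp_sum]
  refine prod_le_prod (fun q hq ↦ ?_) fun q hq ↦ div_sub_one_le_exp (mod_cast hS q hq)
  exact zero_le_one.trans (one_le_div_sub_one (mod_cast hS q hq))

theorem card_primeFactors_mul_log_two_le (m : ℕ) : #m.primeFactors * log 2 ≤ log m := by
  rcases eq_or_ne m 0 with rfl | hm
  · simp
  have hpow : 2 ^ #m.primeFactors ≤ m :=
    (pow_card_le_prod _ _ _ fun q hq ↦ (Nat.prime_of_mem_primeFactors hq).two_le).trans
      (Nat.le_of_dvd (Nat.pos_of_ne_zero hm) (Nat.prod_primeFactors_dvd m))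
  rw [← log_pow]
  exact log_le_log (by positivity) (mod_cast hpow)

theorem two_le_of_mem_filter_primeFactors {m q : ℕ} {r : ℕ → Prop} [DecidablePred r]
    (hq : q ∈ {q ∈ m.primeFactors | r q}) : 2 ≤ q :=
  (Nat.prime_of_mem_primeFactors (mem_filter.1 hq).1).two_le

theorem prod_primeFactors_le_div_sub_one_le (m : ℕ) (y : ℝ) :
    ∏ q ∈ m.primeFactors with (q : ℕ) ≤ y, ((q : ℝ) / (q - 1)) ≤
      ∏ q ∈ Nat.primesLE ⌊y⌋₊, ((q : ℝ) / (q - 1)) := by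
  have hone {q : ℕ} (hq : q.Prime) : 1 ≤ (q : ℝ) / (q - 1) :=
    one_le_div_sub_one (mod_cast hq.one_lt)
  refine prod_le_prod_of_subset_of_one_le (fun q hq ↦ ?_) (fun q hq ↦ ?_)
    fun q hq _ ↦ hone (Nat.prime_of_mem_primesLE hq)
  · obtain ⟨hq, hqy⟩ := mem_filter.1 hq
    exact Nat.mem_primesLE.2 ⟨Nat.le_floor hqy, Nat.prime_of_mem_primeFactors hq⟩
  · exact zero_le_one.trans (hone (Nat.prime_of_mem_primeFactors (mem_filter.1 hq).1))

theorem prod_primeFactors_gt_div_sub_one_le (m : ℕ) {z : ℝ} (hz : 0 < z) :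
    ∏ q ∈ m.primeFactors with z < (q : ℕ), ((q : ℝ) / (q - 1)) ≤
      exp (2 * (log m / (z * log 2))) := by
  refine (prod_div_sub_one_le_exp_sum fun q ↦ two_le_of_mem_filter_primeFactors).trans ?_
  gcongr
  calc ∑ q ∈ m.primeFactors with z < (q : ℕ), 1 / (q : ℝ)
      ≤ #{q ∈ m.primeFactors | z < (q : ℕ)} • (1 / z) :=
        sum_le_card_nsmul _ _ _ fun q hq ↦ one_div_le_one_div_of_le hz (mem_filter.1 hq).2.le
    _ ≤ #m.primeFactors * (1 / z) := by
        rw [nsmul_eq_mul]; gcongr; exact filter_subset _ _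
    _ ≤ log m / log 2 * (1 / z) := by
        gcongr
        exact (le_div_iff₀ (log_pos one_lt_two)).2 (card_primeFactors_mul_log_two_le m)
    _ = log m / (z * log 2) := by rw [div_mul_div_comm, mul_one, mul_comm z]

theorem filter_primeFactors_eq_filter_primesIoc {m : ℕ} (hm : m ≠ 0) {y z : ℝ} (hz : 0 ≤ z) :
    {q ∈ m.primeFactors | y < (q : ℕ) ∧ (q : ℕ) ≤ z} = {q ∈ primesIoc y z | q ∣ m} := by
  ext q
  simp only [mem_filter, Nat.mem_primeFactors, mem_primesIoc hz]
  tauto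

theorem div_totient_le {m : ℕ} (hm : m ≠ 0) (y : ℝ) {z : ℝ} (hz : 0 < z) :
    (m : ℝ) / φ m ≤ (∏ q ∈ Nat.primesLE ⌊y⌋₊, ((q : ℝ) / (q - 1))) *
      exp (2 * reciprocalSumDvd (primesIoc y z) m) * exp (2 * (log m / (z * log 2))) := by
  set F : ℕ → ℝ := fun q ↦ q / (q - 1)
  have hF : ∀ q ∈ m.primeFactors, 1 ≤ F q := fun q hq ↦
    one_le_div_sub_one (mod_cast (Nat.prime_of_mem_primeFactors hq).one_lt)
  have hsmall := prod_primeFactors_le_div_sub_one_le m y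
  have hmiddle : ∏ q ∈ m.primeFactors with y < (q : ℕ) ∧ (q : ℕ) ≤ z, F q ≤
      exp (2 * reciprocalSumDvd (primesIoc y z) m) := by
    simp only [reciprocalSumDvd, Int.natCast_dvd_natCast]
    rw [← filter_primeFactors_eq_filter_primesIoc hm hz.le]
    exact prod_div_sub_one_le_exp_sum fun q ↦ two_le_of_mem_filter_primeFactors
  have hF0 {r : ℕ → Prop} [DecidablePred r] : 0 ≤ ∏ q ∈ m.primeFactors with r q, F q :=
    prod_nonneg fun q hq ↦ zero_le_one.trans (hF q (mem_filter.1 hq).1)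
  calc (m : ℝ) / φ m = ∏ q ∈ m.primeFactors, F q := natCast_div_totient hm
    _ ≤ ∏ q ∈ m.primeFactors, (if (q : ℝ) ≤ y then F q else 1) *
          (if y < (q : ℝ) ∧ (q : ℝ) ≤ z then F q else 1) * (if z < (q : ℝ) then F q else 1) := by
        refine prod_le_prod (fun q hq ↦ zero_le_one.trans (hF q hq)) fun q hq ↦ ?_
        have := hF q hq
        split_ifs <;> first | nlinarith | grind
    _ = (∏ q ∈ m.primeFactors with (q : ℕ) ≤ y, F q) *
          (∏ q ∈ m.primeFactors with y < (q : ℕ) ∧ (q : ℕ) ≤ z, F q) *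
            ∏ q ∈ m.primeFactors with z < (q : ℕ), F q := by
        simp only [prod_mul_distrib, prod_filter]
    _ ≤ _ := mul_le_mul (mul_le_mul hsmall hmiddle hF0 (hF0.trans hsmall))
        (prod_primeFactors_gt_div_sub_one_le m hz) hF0
        (mul_nonneg (hF0.trans hsmall) (exp_pos _).le)

theorem prod_primesLE_floor_div_sub_one_le {y : ℝ} (hy : 3 ≤ y) :
    ∏ q ∈ Nat.primesLE ⌊y⌋₊, ((q : ℝ) / (q - 1)) ≤ 2 * exp 4 * log y := by
  have hfloor : 1 < ⌊y⌋₊ := Nat.lt_of_lt_of_le (by norm_num) (Nat.le_floor (n := 3) hy)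
  have hlog : log ⌊y⌋₊ ≤ log y :=
    log_le_log (by positivity) (Nat.floor_le (by linarith))
  have hone : 1 ≤ log y := by
    rw [le_log_iff_exp_le (by linarith)]
    linarith [exp_one_lt_d9]
  calc ∏ q ∈ Nat.primesLE ⌊y⌋₊, ((q : ℝ) / (q - 1)) ≤ exp 4 * (1 + log ⌊y⌋₊) :=
        prod_primesLE_div_sub_one_le hfloor
    _ ≤ exp 4 * (log y + log y) := by gcongr
    _ = 2 * exp 4 * log y := by ring

theorem exists_eval_div_totient_le (f : ℤ[X]) :
    ∃ M : ℝ, 0 < M ∧ ∀ n : ℕ, 2 ≤ n → ∀ p ≤ n, 0 < f.eval (p : ℤ) → ∀ y : ℝ, 3 ≤ y →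
      ((f.eval (p : ℤ)).toNat : ℝ) / φ (f.eval (p : ℤ)).toNat ≤
        M * log y * exp (2 * reciprocalSumDvd (primesIoc y (log n / 4)) (f.eval (p : ℤ))) := by
  obtain ⟨K, hlog⟩ := exists_log_toNat_eval_le f
  refine ⟨2 * exp 4 * exp (8 * K / log 2), by positivity, fun n hn p hp hpos y hy ↦ ?_⟩
  set m := (f.eval (p : ℤ)).toNat
  have hm : (m : ℤ) = f.eval (p : ℤ) := Int.toNat_of_nonneg hpos.le
  have hlogn : 0 < log n := log_pos (mod_cast hn)
  have hlogy : 0 < log y := log_pos (by linarith)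
  have hlarge : 2 * (log m / (log n / 4 * log 2)) ≤ 8 * K / log 2 :=
    calc 2 * (log m / (log n / 4 * log 2)) ≤ 2 * (K * log n / (log n / 4 * log 2)) := by
          gcongr; exact hlog n hn p hp
      _ = 8 * K / log 2 := by field_simp; ring
  rw [← hm]
  calc (m : ℝ) / φ m ≤ _ := div_totient_le (by omega) y (by positivity : 0 < log n / 4)
    _ ≤ (2 * exp 4 * log y) * exp (2 * reciprocalSumDvd (primesIoc y (log n / 4)) m) *
          exp (8 * K / log 2) := by
        gcongr; exact prod_primesLE_floor_div_sub_one_le hy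
    _ = _ := by ring

theorem exists_one_le_reciprocalSumDvd_of_lt_eval_div_totient (f : ℤ[X]) :
    ∃ M : ℝ, 0 < M ∧ ∀ n : ℕ, 2 ≤ n → ∀ p ≤ n, 0 < f.eval (p : ℤ) → ∀ t : ℝ, 3 ≤ exp (t / M) →
      t < ((f.eval (p : ℤ)).toNat : ℝ) / φ (f.eval (p : ℤ)).toNat →
        1 ≤ reciprocalSumDvd (primesIoc (exp (t / M)) (log n / 4)) (f.eval (p : ℤ)) := by
  obtain ⟨M, hM, hratio⟩ := exists_eval_div_totient_le f
  refine ⟨M * exp 2, by positivity, fun n hn p hp hpos t ht htp ↦ ?_⟩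
  set S := reciprocalSumDvd (primesIoc (exp (t / (M * exp 2))) (log n / 4)) (f.eval (p : ℤ))
  have ht0 : 0 < t := by
    have h : 0 < t / (M * exp 2) := one_lt_exp_iff.1 (by linarith)
    exact (div_pos_iff_of_pos_right (by positivity)).1 h
  have hlt : t * exp 2 < t * exp (2 * S) := by
    rw [← lt_div_iff₀ (exp_pos 2)]
    calc t < M * log (exp (t / (M * exp 2))) * exp (2 * S) :=
          htp.trans_le (hratio n hn p hp hpos _ ht)
      _ = t * exp (2 * S) / exp 2 := by rw [log_exp]; field_simp
  linarith [exp_lt_exp.1 (lt_of_mul_lt_mul_left hlt ht0.le)]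

-- Markov's inequality for `exp (l * g)`.
theorem card_filter_one_le_le_exp_neg_mul_sum {ι : Type*} (s : Finset ι) (g : ι → ℝ) {l : ℝ}
    (hl : 0 ≤ l) : (#{i ∈ s | 1 ≤ g i} : ℝ) ≤ exp (-l) * ∑ i ∈ s, exp (l * g i) := by
  rw [exp_neg, ← div_eq_inv_mul, le_div_iff₀ (exp_pos l), ← nsmul_eq_mul]
  calc #{i ∈ s | 1 ≤ g i} • exp l ≤ ∑ i ∈ s with 1 ≤ g i, exp (l * g i) :=
        card_nsmul_le_sum _ _ _ fun i hi ↦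
          exp_le_exp.2 (le_mul_of_one_le_right hl (mem_filter.1 hi).2)
    _ ≤ ∑ i ∈ s, exp (l * g i) :=
        sum_le_sum_of_subset_of_nonneg (filter_subset _ _) fun i _ _ ↦ (exp_pos _).le

theorem not_natCast_dvd_content_of_lt {f : ℤ[X]} (hf : f ≠ 0) {q : ℕ} (hq : f.content < q) :
    ¬ (q : ℤ) ∣ f.content := by
  have hpos : 0 < f.content := (Int.nonneg_of_normalize_eq_self normalize_content).lt_of_ne'
    (content_eq_zero_iff.not.2 hf)
  exact fun h ↦ hq.not_ge (Int.le_of_dvd hpos h)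

theorem card_primesLE_one_le_reciprocalSumDvd_eval_le {f : ℤ[X]} (hf : f ≠ 0) {n : ℕ} (hn : 2 ≤ n)
    {y : ℝ} (hy : 0 ≤ y) (hfy : f.content ≤ y) :
    (#{p ∈ Nat.primesLE n |
        1 ≤ reciprocalSumDvd (primesIoc y (log n / 4)) (f.eval ((p : ℕ) : ℤ))} : ℝ) ≤
      240 * exp (10 * f.natDegree) * exp (-y ^ (1 / 4 : ℝ)) * Nat.primeCounting n := by
  have hz : 0 ≤ log n / 4 := by positivity
  have hP : ∀ q ∈ primesIoc y (log n / 4), q.Prime ∧ ¬ (q : ℤ) ∣ f.content := fun q hq ↦ by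
    obtain ⟨hq, hyq, -⟩ := (mem_primesIoc hz).1 hq
    exact ⟨hq, not_natCast_dvd_content_of_lt hf (by exact_mod_cast hfy.trans_lt hyq)⟩
  calc _ ≤ exp (-y ^ (1 / 4 : ℝ)) * ∑ p ∈ Nat.primesLE n, exp (y ^ (1 / 4 : ℝ) *
          reciprocalSumDvd (primesIoc y (log n / 4)) (f.eval (p : ℤ))) :=
        card_filter_one_le_le_exp_neg_mul_sum _ _ (by positivity)
    _ ≤ exp (-y ^ (1 / 4 : ℝ)) * (240 * exp (10 * f.natDegree) * Nat.primeCounting n) := by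
        gcongr
        exact sum_exp_rpow_mul_reciprocalSumDvd_eval_le hn hy hP
          (fun q hq ↦ ((mem_primesIoc hz).1 hq).2.1.le)
          (prod_primesIoc_log_div_four_sq_le (by omega) y)
    _ = _ := by ring

theorem le_mul_exp_neg_exp_mul_of_le_imp {a b E c t t₀ : ℝ} (hE : 0 ≤ E) (hb : 0 ≤ b) (hc : 0 ≤ c)
    (hab : a ≤ b) (h : t₀ ≤ t → a ≤ E * exp (-exp (c * t)) * b) :
    a ≤ (E + exp (exp (c * t₀))) * exp (-exp (c * t)) * b := by
  rcases le_or_gt t₀ t with ht | ht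
  · exact (h ht).trans (by gcongr; exact le_add_of_nonneg_right (exp_pos _).le)
  · refine hab.trans (le_mul_of_one_le_left hb ?_)
    calc (1 : ℝ) = exp (exp (c * t)) * exp (-exp (c * t)) := by
          rw [← exp_add, add_neg_cancel, exp_zero]
      _ ≤ exp (exp (c * t₀)) * exp (-exp (c * t)) := by gcongr
      _ ≤ (E + exp (exp (c * t₀))) * exp (-exp (c * t)) := by
          gcongr; exact le_add_of_nonneg_left hE

theorem card_totient_ratio_polynomial_prime_gt_le_general (f : Polynomial ℤ)
    (hpos : ∀ p : ℕ, p.Prime → 0 < f.eval (p : ℤ)) :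
    ∃ c₁ c₂ : ℝ, 0 < c₁ ∧ 0 < c₂ ∧ ∀ x : ℝ, 2 ≤ x → ∀ t : ℝ,
      ((((Finset.range (⌊x⌋₊ + 1)).filter Nat.Prime).filter fun p : ℕ =>
          t < ((f.eval (p : ℤ)).toNat : ℝ) / (Nat.totient (f.eval (p : ℤ)).toNat : ℝ)).card : ℝ) ≤
        c₁ * Real.exp (-Real.exp (c₂ * t)) *
          (((Finset.range (⌊x⌋₊ + 1)).filter Nat.Prime).card : ℝ) := by
  have hf : f ≠ 0 := by rintro rfl; simpa using hpos 2 Nat.prime_two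
  obtain ⟨M, hM, hsum⟩ := exists_one_le_reciprocalSumDvd_of_lt_eval_div_totient f
  set t₀ : ℝ := M * log (max 3 f.content)
  refine ⟨240 * exp (10 * f.natDegree) + exp (exp (1 / (4 * M) * t₀)), 1 / (4 * M), by positivity,
    by positivity, fun x hx t ↦ ?_⟩
  have hn : 2 ≤ ⌊x⌋₊ := Nat.le_floor hx
  rw [← Nat.primesLE_eq_filter_range]
  refine le_mul_exp_neg_exp_mul_of_le_imp (by positivity) (by positivity) (by positivity)
    (mod_cast card_le_card (filter_subset _ _)) fun ht ↦ ?_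
  have hy : max 3 (f.content : ℝ) ≤ exp (t / M) := by
    rwa [← log_le_iff_le_exp (by positivity), le_div_iff₀' hM]
  have hl : exp (t / M) ^ (1 / 4 : ℝ) = exp (1 / (4 * M) * t) := by
    rw [← exp_mul]; congr 1; field_simp
  rw [Nat.primesLE_card_eq_primeCounting, ← hl]
  refine le_trans ?_ (card_primesLE_one_le_reciprocalSumDvd_eval_le hf hn (exp_pos _).le
    ((le_max_right _ _).trans hy))
  exact_mod_cast card_le_card fun p hp ↦ by
    obtain ⟨hp, htp⟩ := mem_filter.1 hp
    have ⟨hpn, hpp⟩ := Nat.mem_primesLE.1 hp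
    exact mem_filter.2 ⟨hp, hsum _ hn p hpn (hpos p hpp) t ((le_max_left _ _).trans hy) htp⟩

/-- Theorem (Radomskii, Theorem 5, inequality (2)): for a primitive polynomial `f` with
positive leading coefficient mapping primes to positive integers,
`#{p ≤ x : f(p)/φ(f(p)) > t} ≤ c₁ exp(-exp(c₂ t)) π(x)`. -/
theorem card_totient_ratio_polynomial_prime_gt_le (f : Polynomial ℤ)
    (hlead : 0 < f.leadingCoeff) (hcont : f.content = 1)
    (hpos : ∀ p : ℕ, p.Prime → 0 < f.eval (p : ℤ)) :
    ∃ c₁ c₂ : ℝ, 0 < c₁ ∧ 0 < c₂ ∧ ∀ x : ℝ, 2 ≤ x → ∀ t : ℝ, 0 < t →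
      ((((Finset.range (⌊x⌋₊ + 1)).filter Nat.Prime).filter fun p : ℕ =>
          t < ((f.eval (p : ℤ)).toNat : ℝ) / (Nat.totient (f.eval (p : ℤ)).toNat : ℝ)).card : ℝ) ≤
        c₁ * Real.exp (-Real.exp (c₂ * t)) *
          (((Finset.range (⌊x⌋₊ + 1)).filter Nat.Prime).card : ℝ) :=
  let ⟨c₁, c₂, hc₁, hc₂, h⟩ := card_totient_ratio_polynomial_prime_gt_le_general f hpos
  ⟨c₁, c₂, hc₁, hc₂, fun x hx t _ ↦ h x hx t⟩
end

section
/- Let f(x) = b_d·x^d + ... + b_0 be a polynomial with integer coefficients such that b_d > 0, gcd(b_d, ..., b_0) = 1, and f(p) is a positive integer for every prime p. Then there exist constants x_0 > 0 and γ > 0 depending only on f such that for every real x ≥ x_0 and every squarefree positive integer n ≤ √x, #{p ≤ x : p prime and n divides f(p)} ≤ γ·π(x)·(Π_{q | n} min(q, d))/φ(n), where the product runs over primes q dividing n and π(x) denotes the number of primes not exceeding x. -/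
/-!
The primes `p` with `n ∣ f(p)` lie in the residue classes mod `n` of the roots of `f` mod `n`. By
the Chinese remainder theorem the number of these classes is the product over `q ∣ n` of the number
of roots of `f` over the field `ℤ/qℤ`, which is at most `min(q, d)`. By the Brun–Titchmarsh
inequality, each class contains `≪ π(x) / φ(n)` primes up to `x`.

The latter comes from the Selberg sieve of level `z²`, `z = x^(1/16)`, applied to one class: the
main term is `X / S` with `X = x / n` and `S ≥ ∑ 1 / φ(l)` over the squarefree `l ≤ z` coprime to
`n`, and comparing with the harmonic sum gives `2 n S ≥ φ(n) log z`.
-/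

open Finset ArithmeticFunction BoundingSieve
open scoped ArithmeticFunction.Moebius

theorem sum_moebius_divisors_filter_dvd {m : ℕ} (hm : Squarefree m) (l : ℕ) :
    ∑ d ∈ m.divisors with l ∣ d, μ d = if m = l then μ l else 0 := by
  by_cases hlm : l ∣ m
  · obtain ⟨k, rfl⟩ := hlm
    obtain ⟨hl, hk⟩ := mul_ne_zero_iff.mp hm.ne_zero
    have hmultiples : {d ∈ (l * k).divisors | l ∣ d} = k.divisors.image (l * ·) := by
      ext d
      simp only [mem_filter, Nat.mem_divisors, mem_image]
      constructor
      · rintro ⟨⟨hd, -⟩, e, rfl⟩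
        exact ⟨e, ⟨Nat.dvd_of_mul_dvd_mul_left (Nat.pos_of_ne_zero hl) hd, hk⟩, rfl⟩
      · rintro ⟨e, ⟨he, -⟩, rfl⟩
        exact ⟨⟨mul_dvd_mul_left l he, hm.ne_zero⟩, dvd_mul_right l e⟩
    calc ∑ d ∈ (l * k).divisors with l ∣ d, μ d = ∑ e ∈ k.divisors, μ (l * e) := by
          rw [hmultiples, sum_image (mul_right_injective₀ hl).injOn]
      _ = μ l * ∑ e ∈ k.divisors, μ e := by
          rw [mul_sum]
          refine sum_congr rfl fun e he ↦ isMultiplicative_moebius.map_mul_of_coprime ?_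
          exact (Nat.coprime_of_squarefree_mul hm).coprime_dvd_right (Nat.dvd_of_mem_divisors he)
      _ = if l * k = l then μ l else 0 := by
          rw [← coe_mul_zeta_apply, moebius_mul_coe_zeta, one_apply]
          simp [hl]
  · rw [if_neg (by rintro rfl; exact hlm dvd_rfl)]
    refine sum_eq_zero fun d hd ↦ absurd ?_ hlm
    exact (mem_filter.mp hd).2.trans (Nat.dvd_of_mem_divisors (mem_filter.mp hd).1)

section SelbergSieve

variable (s : SelbergSieve)

/-- The divisors `l` of the sifting product with `l² ≤ y`, where `y` is the level. -/
noncomputable def levelDivisors : Finset ℕ :=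
  {l ∈ s.prodPrimes.divisors | (l : ℝ) ^ 2 ≤ s.level}

/-- The quantity usually written `S`: the main term of the Selberg sieve is `X / S`. -/
noncomputable def selbergBoundingSum : ℝ :=
  ∑ l ∈ levelDivisors s, s.selbergTerms l

/-- The Selberg weights `λ_d`, which minimise the main term of the `Λ²` sieve among the weights
supported on `levelDivisors` with `λ₁ = 1`. -/
noncomputable def selbergWeight (d : ℕ) : ℝ :=
  μ d / (s.nu d * selbergBoundingSum s) * ∑ l ∈ levelDivisors s with d ∣ l, s.selbergTerms l

variable {s}

theorem one_mem_levelDivisors : 1 ∈ levelDivisors s := by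
  simp [levelDivisors, prodPrimes_ne_zero, s.one_le_level]

theorem levelDivisors_subset : levelDivisors s ⊆ s.prodPrimes.divisors :=
  filter_subset _ _

theorem dvd_prodPrimes_of_mem_levelDivisors {l : ℕ} (hl : l ∈ levelDivisors s) :
    l ∣ s.prodPrimes :=
  Nat.dvd_of_mem_divisors (levelDivisors_subset hl)

theorem selbergTerms_pos_of_mem_levelDivisors {l : ℕ} (hl : l ∈ levelDivisors s) :
    0 < s.selbergTerms l :=
  selbergTerms_pos (dvd_prodPrimes_of_mem_levelDivisors hl)

theorem mem_levelDivisors_of_dvd {d l : ℕ} (hl : l ∈ levelDivisors s) (hd : d ∣ l) :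
    d ∈ levelDivisors s := by
  have hlP := dvd_prodPrimes_of_mem_levelDivisors hl
  have hdl : d ≤ l := Nat.le_of_dvd (Nat.pos_of_dvd_of_pos hlP prodPrimes_ne_zero.bot_lt) hd
  have hlevel : (l : ℝ) ^ 2 ≤ s.level := (mem_filter.mp hl).2
  refine mem_filter.mpr ⟨Nat.mem_divisors.mpr ⟨hd.trans hlP, prodPrimes_ne_zero⟩, ?_⟩
  exact le_trans (by gcongr) hlevel

theorem selbergBoundingSum_pos : 0 < selbergBoundingSum s :=
  sum_pos (fun _ ↦ selbergTerms_pos_of_mem_levelDivisors) ⟨1, one_mem_levelDivisors⟩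

theorem selbergWeight_one : selbergWeight s 1 = 1 := by
  simp only [selbergWeight, one_dvd, filter_true]
  rw [← selbergBoundingSum, s.nu_mult.map_one, moebius_apply_one, Int.cast_one, one_mul,
    one_div_mul_cancel selbergBoundingSum_pos.ne']

theorem selbergWeight_eq_zero {d : ℕ} (hd : d ∉ levelDivisors s) : selbergWeight s d = 0 := by
  rw [selbergWeight, filter_false_of_mem fun l hl hdl ↦ hd (mem_levelDivisors_of_dvd hl hdl),
    sum_empty, mul_zero]

theorem abs_selbergWeight_le {d : ℕ} (hd : d ∣ s.prodPrimes) :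
    |selbergWeight s d| ≤ (s.nu d)⁻¹ := by
  have hS := selbergBoundingSum_pos (s := s)
  have hν := nu_pos_of_dvd_prodPrimes hd
  have hμ : |(μ d : ℝ)| ≤ 1 := mod_cast abs_moebius_le_one (n := d)
  have hT : 0 ≤ ∑ l ∈ levelDivisors s with d ∣ l, s.selbergTerms l :=
    sum_nonneg fun l hl ↦ (selbergTerms_pos_of_mem_levelDivisors (mem_filter.mp hl).1).le
  have hTS : ∑ l ∈ levelDivisors s with d ∣ l, s.selbergTerms l ≤ selbergBoundingSum s :=
    sum_le_sum_of_subset_of_nonneg (filter_subset _ _) fun l hl _ ↦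
      (selbergTerms_pos_of_mem_levelDivisors hl).le
  calc |selbergWeight s d|
      = |(μ d : ℝ)| / (s.nu d * selbergBoundingSum s) *
          ∑ l ∈ levelDivisors s with d ∣ l, s.selbergTerms l := by
        rw [selbergWeight, abs_mul, abs_div, abs_of_pos (mul_pos hν hS), abs_of_nonneg hT]
    _ ≤ 1 / (s.nu d * selbergBoundingSum s) * selbergBoundingSum s := by gcongr
    _ = (s.nu d)⁻¹ := by field_simp

theorem sum_nu_mul_selbergWeight {l : ℕ} :
    ∑ d ∈ s.prodPrimes.divisors with l ∣ d, s.nu d * selbergWeight s d =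
      if l ∈ levelDivisors s then μ l * s.selbergTerms l / selbergBoundingSum s else 0 := by
  calc ∑ d ∈ s.prodPrimes.divisors with l ∣ d, s.nu d * selbergWeight s d
      = ∑ d ∈ s.prodPrimes.divisors with l ∣ d, ∑ m ∈ levelDivisors s with d ∣ m,
          s.selbergTerms m / selbergBoundingSum s * μ d := by
        refine sum_congr rfl fun d hd ↦ ?_
        have hν := nu_ne_zero (Nat.dvd_of_mem_divisors (mem_filter.mp hd).1)
        rw [selbergWeight, ← sum_mul, ← sum_div]
        field_simp
    _ = ∑ m ∈ levelDivisors s, ∑ d ∈ m.divisors with l ∣ d,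
          s.selbergTerms m / selbergBoundingSum s * μ d := by
        refine sum_comm' fun d m ↦ ?_
        simp only [mem_filter, Nat.mem_divisors]
        constructor
        · rintro ⟨⟨⟨-, -⟩, hld⟩, hm, hdm⟩
          exact ⟨⟨⟨hdm, ne_zero_of_dvd_ne_zero prodPrimes_ne_zero
            (dvd_prodPrimes_of_mem_levelDivisors hm)⟩, hld⟩, hm⟩
        · rintro ⟨⟨⟨hdm, -⟩, hld⟩, hm⟩
          exact ⟨⟨⟨hdm.trans (dvd_prodPrimes_of_mem_levelDivisors hm), prodPrimes_ne_zero⟩, hld⟩,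
            hm, hdm⟩
    _ = ∑ m ∈ levelDivisors s,
          if m = l then μ l * s.selbergTerms l / selbergBoundingSum s else 0 := by
        refine sum_congr rfl fun m hm ↦ ?_
        have hm' := squarefree_of_dvd_prodPrimes (dvd_prodPrimes_of_mem_levelDivisors hm)
        rw [← mul_sum, ← Int.cast_sum, sum_moebius_divisors_filter_dvd hm']
        split_ifs with h
        · rw [h]; ring
        · simp
    _ = if l ∈ levelDivisors s then μ l * s.selbergTerms l / selbergBoundingSum s else 0 :=
        sum_ite_eq' _ _ _

theorem mainSum_lambdaSquared_selbergWeight :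
    s.mainSum (lambdaSquared (selbergWeight s)) = (selbergBoundingSum s)⁻¹ := by
  have hS := (selbergBoundingSum_pos (s := s)).ne'
  rw [mainSum_lambdaSquared_eq_sum_mul_sum_sq]
  simp_rw [← sum_filter, sum_nu_mul_selbergWeight, ite_pow, zero_pow two_ne_zero, mul_ite, mul_zero]
  rw [← sum_filter, filter_mem_eq_inter, inter_eq_right.mpr levelDivisors_subset]
  calc ∑ l ∈ levelDivisors s,
        (s.selbergTerms l)⁻¹ * (μ l * s.selbergTerms l / selbergBoundingSum s) ^ 2
      = ∑ l ∈ levelDivisors s, s.selbergTerms l / selbergBoundingSum s ^ 2 := by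
        refine sum_congr rfl fun l hl ↦ ?_
        have hg := (selbergTerms_pos_of_mem_levelDivisors hl).ne'
        have hμ : (μ l : ℝ) ^ 2 = 1 := mod_cast moebius_sq_eq_one_of_squarefree
          (squarefree_of_dvd_prodPrimes (dvd_prodPrimes_of_mem_levelDivisors hl))
        rw [div_pow, mul_pow, hμ]
        field_simp
    _ = (selbergBoundingSum s)⁻¹ := by
        rw [← sum_div, ← selbergBoundingSum]
        field_simp

theorem sum_abs_lambdaSquared_le (n : ℕ) (w : ℕ → ℝ) :
    ∑ d ∈ n.divisors, |lambdaSquared w d| ≤ (∑ d ∈ n.divisors, |w d|) ^ 2 := by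
  calc ∑ d ∈ n.divisors, |lambdaSquared w d|
      ≤ ∑ d ∈ n.divisors, ∑ d₁ ∈ n.divisors, ∑ d₂ ∈ n.divisors,
          if d = d₁.lcm d₂ then |w d₁| * |w d₂| else 0 := by
        refine sum_le_sum fun d hd ↦ ?_
        have hsub : d.divisors ⊆ n.divisors :=
          Nat.divisors_subset_of_dvd (Nat.ne_zero_of_mem_divisors hd) (Nat.dvd_of_mem_divisors hd)
        have hnonneg (d₁ d₂ : ℕ) : 0 ≤ if d = d₁.lcm d₂ then |w d₁| * |w d₂| else 0 := by
          positivity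
        calc |lambdaSquared w d|
            ≤ ∑ d₁ ∈ d.divisors, ∑ d₂ ∈ d.divisors,
                |if d = d₁.lcm d₂ then w d₁ * w d₂ else 0| :=
              (abs_sum_le_sum_abs _ _).trans (sum_le_sum fun _ _ ↦ abs_sum_le_sum_abs _ _)
          _ = ∑ d₁ ∈ d.divisors, ∑ d₂ ∈ d.divisors,
                if d = d₁.lcm d₂ then |w d₁| * |w d₂| else 0 := by
              simp_rw [apply_ite abs, abs_mul, abs_zero]
          _ ≤ _ := by
              refine (sum_le_sum fun d₁ _ ↦ sum_le_sum_of_subset_of_nonneg hsub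
                fun d₂ _ _ ↦ hnonneg d₁ d₂).trans ?_
              exact sum_le_sum_of_subset_of_nonneg hsub
                fun d₁ _ _ ↦ sum_nonneg fun d₂ _ ↦ hnonneg d₁ d₂
    _ = ∑ d₁ ∈ n.divisors, ∑ d₂ ∈ n.divisors, |w d₁| * |w d₂| := by
        rw [sum_comm]
        refine sum_congr rfl fun d₁ hd₁ ↦ ?_
        rw [sum_comm]
        refine sum_congr rfl fun d₂ hd₂ ↦ sum_ite_eq_of_mem' _ _ _ ?_
        exact Nat.mem_divisors.mpr ⟨Nat.lcm_dvd (Nat.dvd_of_mem_divisors hd₁)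
          (Nat.dvd_of_mem_divisors hd₂), Nat.ne_zero_of_mem_divisors hd₁⟩
    _ = (∑ d ∈ n.divisors, |w d|) ^ 2 := by rw [sq, sum_mul_sum]

/-- A version of Selberg's upper bound with the crude error term coming from `|λ_d| ≤ ν(d)⁻¹`
(rather than the sharp `|λ_d| ≤ 1`). -/
theorem siftedSum_le_div_selbergBoundingSum_add {R : ℝ}
    (hR : ∀ d, d ∣ s.prodPrimes → |s.rem d| ≤ R) :
    s.siftedSum ≤ s.totalMass / selbergBoundingSum s +
      R * (∑ d ∈ levelDivisors s, (s.nu d)⁻¹) ^ 2 := by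
  have hR0 : 0 ≤ R := (abs_nonneg _).trans (hR 1 (one_dvd _))
  have hweights : ∑ d ∈ s.prodPrimes.divisors, |selbergWeight s d| ≤
      ∑ d ∈ levelDivisors s, (s.nu d)⁻¹ := by
    rw [← sum_subset levelDivisors_subset fun d _ hd ↦ by rw [selbergWeight_eq_zero hd, abs_zero]]
    exact sum_le_sum fun d hd ↦ abs_selbergWeight_le (dvd_prodPrimes_of_mem_levelDivisors hd)
  have herr : s.errSum (lambdaSquared (selbergWeight s)) ≤
      R * (∑ d ∈ levelDivisors s, (s.nu d)⁻¹) ^ 2 := by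
    calc s.errSum (lambdaSquared (selbergWeight s))
        ≤ ∑ d ∈ s.prodPrimes.divisors, |lambdaSquared (selbergWeight s) d| * R := by
          unfold errSum
          gcongr with d hd
          exact hR d (Nat.dvd_of_mem_divisors hd)
      _ ≤ R * (∑ d ∈ s.prodPrimes.divisors, |selbergWeight s d|) ^ 2 := by
          rw [← sum_mul, mul_comm]
          gcongr
          exact sum_abs_lambdaSquared_le _ _
      _ ≤ _ := by gcongr
  calc s.siftedSum
      ≤ s.totalMass * s.mainSum (lambdaSquared (selbergWeight s)) +
          s.errSum (lambdaSquared (selbergWeight s)) :=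
        siftedSum_le_mainSum_errSum_of_upperMoebius _
          (upperMoebius_lambdaSquared _ selbergWeight_one)
    _ ≤ _ := by
        rw [mainSum_lambdaSquared_selbergWeight, ← div_eq_mul_inv]
        gcongr

end SelbergSieve

theorem sum_le_sum_mul_sum_of_forall_exists_mul {M R : Type*} [Mul M] [CommSemiring R]
    [PartialOrder R] [IsOrderedRing R] {f : M → R} (hf : ∀ a, 0 ≤ f a)
    (hmul : ∀ a b, f (a * b) = f a * f b) {S A B : Finset M}
    (h : ∀ m ∈ S, ∃ a ∈ A, ∃ b ∈ B, a * b = m) :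
    ∑ m ∈ S, f m ≤ (∑ a ∈ A, f a) * ∑ b ∈ B, f b := by
  classical
  calc ∑ m ∈ S, f m ≤ ∑ m ∈ (A ×ˢ B).image fun t ↦ t.1 * t.2, f m := by
        refine sum_le_sum_of_subset_of_nonneg (fun m hm ↦ ?_) fun m _ _ ↦ hf m
        obtain ⟨a, ha, b, hb, rfl⟩ := h m hm
        exact mem_image.mpr ⟨(a, b), mk_mem_product ha hb, rfl⟩
    _ ≤ ∑ t ∈ A ×ˢ B, f (t.1 * t.2) := sum_image_le_of_nonneg fun t _ ↦ hf _
    _ = (∑ a ∈ A, f a) * ∑ b ∈ B, f b := by simp only [hmul, sum_mul_sum, sum_product]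

theorem sum_Icc_inv_le_two_mul_sum_squarefree_inv (z : ℕ) :
    ∑ m ∈ Icc 1 z, (m : ℝ)⁻¹ ≤ 2 * ∑ l ∈ Icc 1 z with Squarefree l, (l : ℝ)⁻¹ := by
  have hfactor (m : ℕ) (hm : m ∈ Icc 1 z) :
      ∃ q ∈ (Icc 1 z).image fun b : ℕ ↦ b ^ 2, ∃ l ∈ {l ∈ Icc 1 z | Squarefree l}, q * l = m := by
    obtain ⟨hm1, hmz⟩ := mem_Icc.mp hm
    obtain ⟨l, b, rfl, hl⟩ := Nat.sq_mul_squarefree m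
    have hb : 0 < b := Nat.pos_of_ne_zero fun hb ↦ by simp [hb] at hm1
    have hl0 : 0 < l := Nat.pos_of_ne_zero hl.ne_zero
    refine ⟨b ^ 2, mem_image_of_mem _ (mem_Icc.mpr ⟨hb, ?_⟩), l,
      mem_filter.mpr ⟨mem_Icc.mpr ⟨hl0, ?_⟩, hl⟩, rfl⟩
    · exact ((Nat.le_self_pow two_ne_zero b).trans (Nat.le_mul_of_pos_right _ hl0)).trans hmz
    · exact (Nat.le_mul_of_pos_left l (by positivity)).trans hmz
  have hsquares : ∑ q ∈ (Icc 1 z).image fun b : ℕ ↦ b ^ 2, (q : ℝ)⁻¹ ≤ 2 := by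
    rw [sum_image (Nat.pow_left_injective two_ne_zero).injOn]
    have h := sum_Ioo_inv_sq_le (α := ℝ) 0 (z + 1)
    have hIoo : Ioo 0 (z + 1) = Icc 1 z := by ext; simp; omega
    simpa [hIoo] using h
  refine (sum_le_sum_mul_sum_of_forall_exists_mul (f := fun m : ℕ ↦ (m : ℝ)⁻¹)
    (fun _ ↦ by positivity) (fun a b ↦ by push_cast; exact mul_inv _ _) hfactor).trans ?_
  gcongr

theorem sum_squarefree_inv_le_mul_sum_coprime_inv {n : ℕ} (hn : n ≠ 0) (z : ℕ) :
    ∑ l ∈ Icc 1 z with Squarefree l, (l : ℝ)⁻¹ ≤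
      (∑ k ∈ n.divisors, (k : ℝ)⁻¹) *
        ∑ l ∈ Icc 1 z with Squarefree l ∧ l.Coprime n, (l : ℝ)⁻¹ := by
  refine sum_le_sum_mul_sum_of_forall_exists_mul (f := fun m : ℕ ↦ (m : ℝ)⁻¹)
    (fun _ ↦ by positivity) (fun a b ↦ by push_cast; exact mul_inv _ _) fun m hm ↦ ?_
  obtain ⟨⟨hm1, hmz⟩, hm⟩ : (1 ≤ m ∧ m ≤ z) ∧ Squarefree m := by simpa using hm
  obtain ⟨l, hl⟩ := Nat.gcd_dvd_left m n
  have hlm : l ∣ m := Dvd.intro_left _ hl.symm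
  have hcop : (m.gcd n).Coprime l := Nat.coprime_of_squarefree_mul (hl ▸ hm)
  refine ⟨m.gcd n, Nat.mem_divisors.mpr ⟨Nat.gcd_dvd_right m n, hn⟩, l, ?_, hl.symm⟩
  simp only [mem_filter, mem_Icc]
  refine ⟨⟨Nat.pos_of_dvd_of_pos hlm hm1, (Nat.le_of_dvd hm1 hlm).trans hmz⟩,
    hm.squarefree_of_dvd hlm, ?_⟩
  exact Nat.eq_one_of_dvd_coprimes hcop (Nat.gcd_dvd_gcd_of_dvd_left n hlm) (Nat.gcd_dvd_left l n)

theorem totient_mul_le (a b : ℕ) : (a * b).totient ≤ a * b.totient := by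
  induction a using Nat.recOnMul generalizing b with
  | zero => simp
  | one => simp
  | prime p hp =>
    by_cases hpb : p ∣ b
    · rw [Nat.totient_mul_of_prime_of_dvd hp hpb]
    · rw [Nat.totient_mul_of_prime_of_not_dvd hp hpb]
      gcongr
      exact Nat.sub_le p 1
  | mul p q hp hq =>
    calc (p * q * b).totient ≤ p * (q * b).totient := by rw [mul_assoc]; exact hp _
      _ ≤ p * q * b.totient := by rw [mul_assoc]; gcongr; exact hq _

theorem sum_divisors_inv_mul_totient_le (n : ℕ) :
    (∑ k ∈ n.divisors, (k : ℝ)⁻¹) * n.totient ≤ n := by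
  calc (∑ k ∈ n.divisors, (k : ℝ)⁻¹) * n.totient
      = ∑ k ∈ n.divisors, (k : ℝ)⁻¹ * n.totient := sum_mul _ _ _
    _ ≤ ∑ k ∈ n.divisors, ((n / k).totient : ℝ) := by
        refine sum_le_sum fun k hk ↦ ?_
        have hk0 : (0 : ℝ) < k := mod_cast Nat.pos_of_mem_divisors hk
        have hle := totient_mul_le k (n / k)
        rw [Nat.mul_div_cancel' (Nat.dvd_of_mem_divisors hk)] at hle
        rw [inv_mul_le_iff₀ hk0]
        exact_mod_cast hle
    _ = n := by
        rw [Nat.sum_div_divisors n fun k ↦ (k.totient : ℝ)]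
        exact_mod_cast Nat.sum_totient n

theorem log_mul_totient_le_sum_inv_totient {n : ℕ} (hn : n ≠ 0) (z : ℕ) :
    Real.log (z + 1) * n.totient ≤
      2 * n * ∑ l ∈ Icc 1 z with Squarefree l ∧ l.Coprime n, (l.totient : ℝ)⁻¹ := by
  have hharmonic : Real.log (z + 1) ≤ ∑ m ∈ Icc 1 z, (m : ℝ)⁻¹ := by
    simpa [harmonic_eq_sum_Icc] using log_add_one_le_harmonic z
  calc Real.log (z + 1) * n.totient
      ≤ 2 * ((∑ k ∈ n.divisors, (k : ℝ)⁻¹) *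
          ∑ l ∈ Icc 1 z with Squarefree l ∧ l.Coprime n, (l : ℝ)⁻¹) * n.totient := by
        gcongr
        refine (hharmonic.trans (sum_Icc_inv_le_two_mul_sum_squarefree_inv z)).trans ?_
        gcongr
        exact sum_squarefree_inv_le_mul_sum_coprime_inv hn z
    _ = 2 * ((∑ k ∈ n.divisors, (k : ℝ)⁻¹) * n.totient) *
          ∑ l ∈ Icc 1 z with Squarefree l ∧ l.Coprime n, (l : ℝ)⁻¹ := by ring
    _ ≤ 2 * n * ∑ l ∈ Icc 1 z with Squarefree l ∧ l.Coprime n, (l.totient : ℝ)⁻¹ := by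
        gcongr with l hl
        · exact sum_divisors_inv_mul_totient_le n
        · exact_mod_cast Nat.totient_pos.mpr (mem_Icc.mp (mem_filter.mp hl).1).1
        · exact Nat.totient_le l

theorem abs_card_modEq_sub_div_le {r : ℕ} (hr : 0 < r) (N c : ℕ) :
    |(#{m ∈ range N | m ≡ c [MOD r]} : ℝ) - N / r| ≤ 1 := by
  have hfloor : ((N / r : ℕ) : ℝ) ≤ N / r := Nat.cast_div_le
  have hlt : (N / r : ℝ) < (N / r : ℕ) + 1 := by
    simpa [Nat.floor_div_eq_div] using Nat.lt_floor_add_one (N / r : ℝ)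
  rw [← Nat.count_eq_card_filter_range, Nat.count_modEq_card N hr c, abs_le]
  split_ifs <;> push_cast <;> constructor <;> linarith

theorem exists_filter_modEq_and_dvd_eq {n d : ℕ} (hnd : n.Coprime d) (A : Finset ℕ) (a : ℕ) :
    ∃ c, {m ∈ A | m ≡ a [MOD n] ∧ d ∣ m} = {m ∈ A | m ≡ c [MOD n * d]} := by
  obtain ⟨c, hca, hc0⟩ := Nat.chineseRemainder hnd a 0
  refine ⟨c, filter_congr fun m _ ↦ ?_⟩
  rw [← Nat.modEq_and_modEq_iff_modEq_mul hnd, ← Nat.modEq_zero_iff_dvd]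
  exact and_congr ⟨(·.trans hca.symm), (·.trans hca)⟩ ⟨(·.trans hc0.symm), (·.trans hc0)⟩

/-- The product of the primes up to `z` that do not divide `n`. -/
def coprimePrimorial (n z : ℕ) : ℕ :=
  ∏ p ∈ Nat.primesLE z with p.Coprime n, p

theorem squarefree_coprimePrimorial (n z : ℕ) : Squarefree (coprimePrimorial n z) :=
  (squarefree_primorial z).squarefree_of_dvd (prod_dvd_prod_of_subset _ _ _ (filter_subset _ _))

theorem coprime_coprimePrimorial (n z : ℕ) : n.Coprime (coprimePrimorial n z) :=
  Nat.Coprime.prod_right fun _ hp ↦ (mem_filter.mp hp).2.symm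

theorem coprimePrimorial_coprime_of_lt {p z : ℕ} (hp : p.Prime) (hz : z < p) (n : ℕ) :
    (coprimePrimorial n z).Coprime p :=
  Nat.Coprime.prod_left fun q hq ↦ by
    obtain ⟨hqz, hq⟩ := Nat.mem_primesLE.mp (mem_filter.mp hq).1
    exact (Nat.coprime_primes hq hp).mpr (hqz.trans_lt hz).ne

theorem dvd_coprimePrimorial {l n z : ℕ} (hl : Squarefree l) (hln : l.Coprime n) (hlz : l ≤ z) :
    l ∣ coprimePrimorial n z := by
  rw [← Nat.prod_primeFactors_of_squarefree hl]
  refine prod_dvd_prod_of_subset _ _ _ fun p hp ↦ ?_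
  have hpl := Nat.dvd_of_mem_primeFactors hp
  exact mem_filter.mpr ⟨Nat.mem_primesLE.mpr ⟨(Nat.le_of_dvd hl.ne_zero.bot_lt hpl).trans hlz,
    Nat.prime_of_mem_primeFactors hp⟩, hln.coprime_dvd_left hpl⟩

/-- The Selberg sieve of level `z²` for the integers `m < N` with `m ≡ a [MOD n]`, sifted by the
primes up to `z` that do not divide `n`. -/
noncomputable def progressionSieve (N n a : ℕ) {z : ℕ} (hz : 1 ≤ z) : SelbergSieve where
  support := {m ∈ range N | m ≡ a [MOD n]}
  prodPrimes := coprimePrimorial n z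
  prodPrimes_squarefree := squarefree_coprimePrimorial n z
  weights _ := 1
  weights_nonneg _ := zero_le_one
  totalMass := N / n
  nu := ⟨fun d ↦ (d : ℝ)⁻¹, by simp⟩
  nu_mult := ⟨by simp, fun _ ↦ by simp [mul_comm]⟩
  nu_pos_of_prime p hp _ := by simpa using hp.pos
  nu_lt_one_of_prime p hp _ := by simpa using inv_lt_one_of_one_lt₀ (mod_cast hp.one_lt)
  level := z ^ 2
  one_le_level := mod_cast Nat.one_le_pow 2 z hz

section ProgressionSieve

variable {N n a z : ℕ} {hz : 1 ≤ z}

theorem nu_progressionSieve (d : ℕ) : (progressionSieve N n a hz).nu d = (d : ℝ)⁻¹ :=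
  rfl

theorem selbergTerms_progressionSieve (l : ℕ) :
    (progressionSieve N n a hz).selbergTerms l = (l.totient : ℝ)⁻¹ := by
  have htotient : (l.totient : ℝ) = l * ∏ p ∈ l.primeFactors, (1 - (p : ℝ)⁻¹) := by
    simpa using congrArg (Rat.cast : ℚ → ℝ) (Nat.totient_eq_mul_prod_factors l)
  simp only [selbergTerms_apply, nu_progressionSieve, htotient, mul_inv, prod_inv_distrib]

theorem abs_rem_progressionSieve_le (hn : 0 < n) {d : ℕ}
    (hd : d ∣ (progressionSieve N n a hz).prodPrimes) :
    |(progressionSieve N n a hz).rem d| ≤ 1 := by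
  have hd0 : 0 < d := Nat.pos_of_dvd_of_pos hd prodPrimes_ne_zero.bot_lt
  have hnd : n.Coprime d := (coprime_coprimePrimorial n z).coprime_dvd_right hd
  obtain ⟨c, hc⟩ := exists_filter_modEq_and_dvd_eq hnd (range N) a
  have hmult : (progressionSieve N n a hz).multSum d =
      (#{m ∈ range N | m ≡ c [MOD n * d]} : ℝ) := by
    simp [multSum, progressionSieve, ← hc, filter_filter]
  have hmass : (progressionSieve N n a hz).nu d * (progressionSieve N n a hz).totalMass =
      N / (n * d : ℕ) := by
    change (d : ℝ)⁻¹ * (N / n) = _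
    push_cast
    field_simp
  rw [rem, hmult, hmass]
  exact abs_card_modEq_sub_div_le (Nat.mul_pos hn hd0) N c

theorem le_of_mem_levelDivisors_progressionSieve {l : ℕ}
    (hl : l ∈ levelDivisors (progressionSieve N n a hz)) : l ≤ z := by
  have hlz : (l : ℝ) ^ 2 ≤ z ^ 2 := (mem_filter.mp hl).2
  exact_mod_cast le_of_sq_le_sq hlz (by positivity)

theorem sum_levelDivisors_progressionSieve_inv_nu_le :
    ∑ d ∈ levelDivisors (progressionSieve N n a hz), ((progressionSieve N n a hz).nu d)⁻¹ ≤
      (z : ℝ) ^ 2 := by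
  have hsub : levelDivisors (progressionSieve N n a hz) ⊆ Icc 1 z := fun d hd ↦
    mem_Icc.mpr ⟨Nat.pos_of_mem_divisors (levelDivisors_subset hd),
      le_of_mem_levelDivisors_progressionSieve hd⟩
  calc ∑ d ∈ levelDivisors (progressionSieve N n a hz), ((progressionSieve N n a hz).nu d)⁻¹
      ≤ ∑ _d ∈ levelDivisors (progressionSieve N n a hz), (z : ℝ) := by
        refine sum_le_sum fun d hd ↦ ?_
        rw [nu_progressionSieve, inv_inv]
        exact_mod_cast le_of_mem_levelDivisors_progressionSieve hd
    _ ≤ ∑ _d ∈ Icc 1 z, (z : ℝ) := sum_le_sum_of_subset_of_nonneg hsub fun _ _ _ ↦ by positivity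
    _ = (z : ℝ) ^ 2 := by simp [sq]

theorem sum_inv_totient_le_selbergBoundingSum :
    ∑ l ∈ Icc 1 z with Squarefree l ∧ l.Coprime n, (l.totient : ℝ)⁻¹ ≤
      selbergBoundingSum (progressionSieve N n a hz) := by
  have hsub : {l ∈ Icc 1 z | Squarefree l ∧ l.Coprime n} ⊆
      levelDivisors (progressionSieve N n a hz) := fun l hl ↦ by
    obtain ⟨hl, hlsq, hln⟩ := mem_filter.mp hl
    have hlz := (mem_Icc.mp hl).2
    refine mem_filter.mpr ⟨Nat.mem_divisors.mpr ⟨dvd_coprimePrimorial hlsq hln hlz,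
      prodPrimes_ne_zero⟩, ?_⟩
    change (l : ℝ) ^ 2 ≤ z ^ 2
    gcongr
  simp only [selbergBoundingSum, selbergTerms_progressionSieve]
  exact sum_le_sum_of_subset_of_nonneg hsub fun _ _ _ ↦ by positivity

theorem card_primes_modEq_le_siftedSum_add :
    (#{p ∈ range N | p.Prime ∧ p ≡ a [MOD n]} : ℝ) ≤
      (progressionSieve N n a hz).siftedSum + z := by
  have hsifted : (progressionSieve N n a hz).siftedSum =
      #{m ∈ range N | m ≡ a [MOD n] ∧ (coprimePrimorial n z).Coprime m} := by
    rw [← filter_filter]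
    exact sum_boole _ _
  have hcover : {p ∈ range N | p.Prime ∧ p ≡ a [MOD n]} ⊆
      {m ∈ range N | m ≡ a [MOD n] ∧ (coprimePrimorial n z).Coprime m} ∪ Icc 1 z := fun p hp ↦ by
    obtain ⟨hpN, hp, hpa⟩ := mem_filter.mp hp
    rcases le_or_gt p z with hpz | hpz
    · exact mem_union_right _ (mem_Icc.mpr ⟨hp.pos, hpz⟩)
    · exact mem_union_left _ (mem_filter.mpr ⟨hpN, hpa, coprimePrimorial_coprime_of_lt hp hpz n⟩)
  have hcard := (card_le_card hcover).trans (card_union_le _ _)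
  rw [Nat.card_Icc, Nat.add_sub_cancel] at hcard
  rw [hsifted]
  exact_mod_cast hcard

end ProgressionSieve

theorem card_primes_modEq_le_div_log_add {n z : ℕ} (hn : n ≠ 0) (hz : 1 ≤ z) (N a : ℕ) :
    (#{p ∈ range N | p.Prime ∧ p ≡ a [MOD n]} : ℝ) ≤
      2 * N / (Real.log (z + 1) * n.totient) + z ^ 4 + z := by
  have hn0 : 0 < n := Nat.pos_of_ne_zero hn
  have hlog : 0 < Real.log (z + 1) := Real.log_pos (by norm_cast; omega)
  have hS : Real.log (z + 1) * n.totient ≤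
      2 * n * selbergBoundingSum (progressionSieve N n a hz) :=
    (log_mul_totient_le_sum_inv_totient hn z).trans
      (by gcongr; exact sum_inv_totient_le_selbergBoundingSum)
  have hmain : (N / n : ℝ) / selbergBoundingSum (progressionSieve N n a hz) ≤
      2 * N / (Real.log (z + 1) * n.totient) := by
    calc (N / n : ℝ) / selbergBoundingSum (progressionSieve N n a hz)
        = 2 * N / (2 * n * selbergBoundingSum (progressionSieve N n a hz)) := by
          rw [div_div, mul_assoc, mul_div_mul_left _ _ two_ne_zero]
      _ ≤ _ := by
          have := Nat.totient_pos.mpr hn0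
          gcongr
  have hsieve : (progressionSieve N n a hz).siftedSum ≤
      (N / n : ℝ) / selbergBoundingSum (progressionSieve N n a hz) + z ^ 4 := by
    refine (siftedSum_le_div_selbergBoundingSum_add
      fun d ↦ abs_rem_progressionSieve_le hn0).trans ?_
    rw [one_mul, show (z : ℝ) ^ 4 = (z ^ 2) ^ 2 by ring]
    refine add_le_add le_rfl (pow_le_pow_left₀ ?_ sum_levelDivisors_progressionSieve_inv_nu_le 2)
    exact sum_nonneg fun d _ ↦ by rw [nu_progressionSieve]; positivity
  linarith [card_primes_modEq_le_siftedSum_add (N := N) (n := n) (a := a) (hz := hz)]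

theorem card_primes_modEq_le_div_log {x : ℝ} (hx : 1 < x) {n : ℕ} (hn : n ≠ 0)
    (hnx : (n : ℝ) ≤ √x) (a : ℕ) :
    (#{p ∈ range (⌊x⌋₊ + 1) | p.Prime ∧ p ≡ a [MOD n]} : ℝ) ≤
      96 * x / (Real.log x * n.totient) := by
  obtain ⟨y, hy, rfl⟩ : ∃ y : ℝ, 1 < y ∧ y ^ 16 = x :=
    ⟨x ^ (16⁻¹ : ℝ), Real.one_lt_rpow hx (by norm_num),
      mod_cast Real.rpow_inv_natCast_pow (zero_le_one.trans hx.le) (n := 16) (by norm_num)⟩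
  have hφ : 0 < n.totient := Nat.totient_pos.mpr (Nat.pos_of_ne_zero hn)
  have hlog : 0 < Real.log y := Real.log_pos hy
  have hφy : (n.totient : ℝ) ≤ y ^ 8 := by
    rw [show y ^ 16 = (y ^ 8) ^ 2 by ring, Real.sqrt_sq (by positivity)] at hnx
    exact le_trans (mod_cast Nat.totient_le n) hnx
  have hfloor : (⌊y⌋₊ : ℝ) ≤ y := Nat.floor_le (by positivity)
  have hmain : 2 * (⌊y ^ 16⌋₊ + 1 : ℕ) / (Real.log (⌊y⌋₊ + 1) * n.totient) ≤
      4 * (y ^ 16 / (Real.log y * n.totient)) := by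
    have hN : ((⌊y ^ 16⌋₊ + 1 : ℕ) : ℝ) ≤ 2 * y ^ 16 := by
      push_cast
      linarith [Nat.floor_le (show 0 ≤ y ^ 16 by positivity), one_lt_pow₀ hy (n := 16) (by simp)]
    calc 2 * ((⌊y ^ 16⌋₊ + 1 : ℕ) : ℝ) / (Real.log (⌊y⌋₊ + 1) * n.totient)
        ≤ 2 * (2 * y ^ 16) / (Real.log y * n.totient) := by
          gcongr
          exact (Nat.lt_floor_add_one y).le
      _ = 4 * (y ^ 16 / (Real.log y * n.totient)) := by ring
  have herr : y ^ 4 ≤ y ^ 16 / (Real.log y * n.totient) := by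
    rw [le_div_iff₀ (by positivity)]
    calc y ^ 4 * (Real.log y * n.totient) ≤ y ^ 4 * (y * y ^ 8) := by
          gcongr
          exact Real.log_le_self (by positivity)
      _ = y ^ 13 := by ring
      _ ≤ y ^ 16 := pow_le_pow_right₀ hy.le (by norm_num)
  have hz4 : (⌊y⌋₊ : ℝ) ^ 4 ≤ y ^ 4 := by gcongr
  have hz : (⌊y⌋₊ : ℝ) ≤ y ^ 4 := hfloor.trans (le_self_pow₀ hy.le (by norm_num))
  calc (#{p ∈ range (⌊y ^ 16⌋₊ + 1) | p.Prime ∧ p ≡ a [MOD n]} : ℝ)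
      ≤ 2 * (⌊y ^ 16⌋₊ + 1 : ℕ) / (Real.log (⌊y⌋₊ + 1) * n.totient) + ⌊y⌋₊ ^ 4 + ⌊y⌋₊ :=
        card_primes_modEq_le_div_log_add hn (Nat.one_le_floor_iff y |>.mpr hy.le) _ a
    _ ≤ 6 * (y ^ 16 / (Real.log y * n.totient)) := by linarith
    _ = 96 * y ^ 16 / (Real.log (y ^ 16) * n.totient) := by
        rw [Real.log_pow]
        field_simp
        norm_num

theorem div_log_le_primeCounting {x : ℝ} (hx : 16 ≤ x) :
    x / (4 * Real.log x) ≤ Nat.primeCounting ⌊x⌋₊ := by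
  have hlog : 0 < Real.log x := Real.log_pos (by linarith)
  refine le_trans ?_ (Chebyshev.pi_ge' (by linarith))
  have htangent : Real.log (x + 2) ≤ (x + 2) / 16 - 1 + 4 * Real.log 2 := by
    calc Real.log (x + 2) = Real.log ((x + 2) / 16) + Real.log (2 ^ 4) := by
          rw [← Real.log_mul (by positivity) (by norm_num)]
          congr 1
          ring
      _ ≤ (x + 2) / 16 - 1 + 4 * Real.log 2 := by
          rw [Real.log_pow]
          gcongr
          · exact Real.log_le_sub_one_of_pos (by positivity)
          · norm_num
  have hnum : x ≤ 4 * ((x - 1) * Real.log 2 - Real.log (x + 2)) := by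
    nlinarith [Real.log_two_gt_d9, Real.log_two_lt_d9]
  rw [div_le_div_iff₀ (by positivity) hlog]
  nlinarith

theorem card_primes_modEq_le_primeCounting_div_totient {x : ℝ} (hx : 16 ≤ x) {n : ℕ} (hn : n ≠ 0)
    (hnx : (n : ℝ) ≤ √x) (a : ℕ) :
    (#{p ∈ range (⌊x⌋₊ + 1) | p.Prime ∧ p ≡ a [MOD n]} : ℝ) ≤
      384 * Nat.primeCounting ⌊x⌋₊ / n.totient := by
  have hlog : Real.log x ≠ 0 := (Real.log_pos (by linarith)).ne'
  calc (#{p ∈ range (⌊x⌋₊ + 1) | p.Prime ∧ p ≡ a [MOD n]} : ℝ)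
      ≤ 96 * x / (Real.log x * n.totient) := card_primes_modEq_le_div_log (by linarith) hn hnx a
    _ = 384 * (x / (4 * Real.log x)) / n.totient := by field_simp; norm_num
    _ ≤ 384 * Nat.primeCounting ⌊x⌋₊ / n.totient := by
        gcongr
        exact div_log_le_primeCounting hx

/-- The roots of `f` modulo `n`, as residues in `{0, …, n - 1}`. -/
def rootsMod (f : Polynomial ℤ) (n : ℕ) : Finset ℕ :=
  {r ∈ range n | (n : ℤ) ∣ f.eval (r : ℤ)}

section RootsMod

variable {f : Polynomial ℤ} {n : ℕ}

theorem mod_mem_rootsMod (hn : 0 < n) {m : ℕ} (hm : (n : ℤ) ∣ f.eval (m : ℤ)) :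
    m % n ∈ rootsMod f n := by
  refine mem_filter.mpr ⟨mem_range.mpr (Nat.mod_lt m hn), (dvd_iff_dvd_of_dvd_sub ?_).mp hm⟩
  exact (Nat.modEq_iff_dvd.mp (Nat.mod_modEq m n)).trans (Polynomial.sub_dvd_eval_sub _ _ f)

theorem map_intCastRingHom_zmod_eq_zero_iff :
    f.map (Int.castRingHom (ZMod n)) = 0 ↔ (n : ℤ) ∣ f.content := by
  rw [Polynomial.dvd_content_iff_C_dvd, Polynomial.C_dvd_iff_dvd_coeff]
  simp [Polynomial.ext_iff, ZMod.intCast_zmod_eq_zero_iff_dvd]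

theorem card_rootsMod_le_natDegree {q : ℕ} [Fact q.Prime] (hq : ¬ (q : ℤ) ∣ f.content) :
    #(rootsMod f q) ≤ f.natDegree := by
  have hg : f.map (Int.castRingHom (ZMod q)) ≠ 0 := map_intCastRingHom_zmod_eq_zero_iff.not.mpr hq
  calc #(rootsMod f q) ≤ #(f.map (Int.castRingHom (ZMod q))).roots.toFinset := by
        refine card_le_card_of_injOn (fun r ↦ (r : ZMod q)) (fun r hr ↦ ?_) fun r hr t ht hrt ↦ ?_
        · have hroot := (mem_filter.mp hr).2
          rw [← ZMod.intCast_zmod_eq_zero_iff_dvd, ← eq_intCast (Int.castRingHom (ZMod q)),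
            ← Polynomial.eval_natCast_map] at hroot
          exact Multiset.mem_toFinset.mpr ((Polynomial.mem_roots hg).mpr hroot)
        · exact Nat.ModEq.eq_of_lt_of_lt ((ZMod.natCast_eq_natCast_iff r t q).mp hrt)
            (mem_range.mp (mem_filter.mp hr).1) (mem_range.mp (mem_filter.mp ht).1)
    _ ≤ (f.map (Int.castRingHom (ZMod q))).roots.card := Multiset.toFinset_card_le _
    _ ≤ (f.map (Int.castRingHom (ZMod q))).natDegree := Polynomial.card_roots' _
    _ ≤ f.natDegree := Polynomial.natDegree_map_le

theorem card_rootsMod_le_prod (hn : Squarefree n) :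
    #(rootsMod f n) ≤ ∏ q ∈ n.primeFactors, #(rootsMod f q) := by
  rw [← card_pi]
  refine card_le_card_of_injOn (fun r q _ ↦ r % q) (fun r hr ↦ ?_) fun r hr t ht hrt ↦ ?_
  · refine mem_pi.mpr fun q hq ↦ mod_mem_rootsMod (Nat.pos_of_mem_primeFactors hq) ?_
    exact (Int.natCast_dvd_natCast.mpr (Nat.dvd_of_mem_primeFactors hq)).trans (mem_filter.mp hr).2
  · have hdvd : (n : ℤ) ∣ t - r := by
      rw [← Nat.prod_primeFactors_of_squarefree hn, Nat.cast_prod]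
      refine prod_dvd_of_coprime (fun p hp q hq hpq ↦ ?_) fun q hq ↦
        Nat.modEq_iff_dvd.mp (congrFun₂ hrt q hq)
      exact Nat.isCoprime_iff_coprime.mpr <| (Nat.coprime_primes
        (Nat.prime_of_mem_primeFactors hp) (Nat.prime_of_mem_primeFactors hq)).mpr hpq
    exact (Nat.modEq_iff_dvd.mpr hdvd).eq_of_lt_of_lt (mem_range.mp (mem_filter.mp hr).1)
      (mem_range.mp (mem_filter.mp ht).1)

theorem card_rootsMod_le_prod_min (hn : Squarefree n) (hf : IsCoprime (n : ℤ) f.content) :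
    #(rootsMod f n) ≤ ∏ q ∈ n.primeFactors, min q f.natDegree := by
  refine (card_rootsMod_le_prod hn).trans (prod_le_prod' fun q hq ↦ ?_)
  have hqprime := Nat.prime_of_mem_primeFactors hq
  have : Fact q.Prime := ⟨hqprime⟩
  refine le_min ((card_filter_le _ _).trans (card_range q).le) (card_rootsMod_le_natDegree ?_)
  intro hqf
  have hqn : (q : ℤ) ∣ n := Int.natCast_dvd_natCast.mpr (Nat.dvd_of_mem_primeFactors hq)
  exact (Nat.prime_iff_prime_int.mp hqprime).not_isUnit (hf.isUnit_of_dvd' hqn hqf)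

end RootsMod

theorem card_primes_dvd_polynomial_le_general (f : Polynomial ℤ) {x : ℝ} (hx : 16 ≤ x) {n : ℕ}
    (hn : Squarefree n) (hf : IsCoprime (n : ℤ) f.content) (hnx : (n : ℝ) ≤ √x) :
    (#{p ∈ range (⌊x⌋₊ + 1) | Nat.Prime p ∧ (n : ℤ) ∣ f.eval (p : ℤ)} : ℝ) ≤
      384 * (#{p ∈ range (⌊x⌋₊ + 1) | p.Prime} : ℝ) *
        (∏ q ∈ n.primeFactors, (min q f.natDegree : ℝ)) / n.totient := by
  have hn0 : 0 < n := hn.ne_zero.bot_lt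
  have hcover : {p ∈ range (⌊x⌋₊ + 1) | Nat.Prime p ∧ (n : ℤ) ∣ f.eval (p : ℤ)} ⊆
      (rootsMod f n).biUnion fun a ↦ {p ∈ range (⌊x⌋₊ + 1) | p.Prime ∧ p ≡ a [MOD n]} := by
    intro p hp
    obtain ⟨hpx, hp, hpn⟩ := mem_filter.mp hp
    exact mem_biUnion.mpr ⟨p % n, mod_mem_rootsMod hn0 hpn,
      mem_filter.mpr ⟨hpx, hp, (Nat.mod_modEq p n).symm⟩⟩
  have hroots : (#(rootsMod f n) : ℝ) ≤ ∏ q ∈ n.primeFactors, (min q f.natDegree : ℝ) :=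
    mod_cast card_rootsMod_le_prod_min hn hf
  calc (#{p ∈ range (⌊x⌋₊ + 1) | Nat.Prime p ∧ (n : ℤ) ∣ f.eval (p : ℤ)} : ℝ)
      ≤ ∑ a ∈ rootsMod f n, (#{p ∈ range (⌊x⌋₊ + 1) | p.Prime ∧ p ≡ a [MOD n]} : ℝ) :=
        mod_cast (card_le_card hcover).trans card_biUnion_le
    _ ≤ ∑ _a ∈ rootsMod f n, 384 * (Nat.primeCounting ⌊x⌋₊ : ℝ) / n.totient :=
        sum_le_sum fun a _ ↦ card_primes_modEq_le_primeCounting_div_totient hx hn.ne_zero hnx a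
    _ = 384 * Nat.primeCounting ⌊x⌋₊ * #(rootsMod f n) / n.totient := by
        rw [sum_const, nsmul_eq_mul]
        ring
    _ ≤ _ := by
        rw [← Nat.primesLE_card_eq_primeCounting, Nat.primesLE_eq_filter_range]
        gcongr

/-- For a primitive polynomial `f` with positive leading coefficient taking positive values
at primes, there are constants `x₀, γ > 0` depending only on `f` such that for all `x ≥ x₀`
and all squarefree `n ≤ √x`,
`#{p ≤ x : p prime, n ∣ f(p)} ≤ γ π(x) (∏_{q ∣ n} min(q, deg f)) / φ(n)`. -/
theorem card_primes_dvd_polynomial_le (f : Polynomial ℤ)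
    (hlead : 0 < f.leadingCoeff) (hcont : f.content = 1)
    (hpos : ∀ p : ℕ, p.Prime → 0 < f.eval (p : ℤ)) :
    ∃ x₀ γ : ℝ, 0 < x₀ ∧ 0 < γ ∧ ∀ x : ℝ, x₀ ≤ x →
      ∀ n : ℕ, 0 < n → Squarefree n → (n : ℝ) ≤ Real.sqrt x →
        (((Finset.range (⌊x⌋₊ + 1)).filter fun p : ℕ =>
            p.Prime ∧ (n : ℤ) ∣ f.eval (p : ℤ)).card : ℝ) ≤
          γ * (((Finset.range (⌊x⌋₊ + 1)).filter Nat.Prime).card : ℝ) *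
            (∏ q ∈ n.primeFactors, (min q f.natDegree : ℝ)) / (Nat.totient n : ℝ) := by
  refine ⟨16, 384, by norm_num, by norm_num, fun _ hx _ _ hn hnx ↦ ?_⟩
  exact card_primes_dvd_polynomial_le_general f hx hn (hcont ▸ isCoprime_one_right) hnx
end
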